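/- Let ε > 0, K ∈ ℕ, and let α ∈ (0,1) be an irrational of type bounded by K. Let E be the complex Banach space of 1-periodic holomorphic functions on Π_ε that are continuous and bounded on the closure of Π_ε, equipped with the sup norm, and for u ∈ E let F_u(z) = z + u(z) (so F_u with u ≡ α represents the rotation R_α). Then there exist κ > 0 and an analytic map Ψ from the open ball of radius κ around the constant function α in E to ℂ such that: Ψ(α) = 0, the Fréchet derivative of Ψ at the constant function α is a nonzero (hence surjective) continuous linear functional, and for every u in this ball, Ψ(u) = 0 if and only if F_u is conformally conjugate to R_α on Π_{ε/2}, i.e. there exists an injective holomorphic Φ : Π_{ε/2} → ℂ with Φ(z+1) = Φ(z)+1 and Φ(F_u(z)) = Φ(z) + α wherever both sides are defined. (Hence the set of maps near R_α that are analytically linearizable on Π_{ε/2} is an embedded analytic submanifold of codimension 1 at R_α.) -/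

import Mathlib

open Filter Set

/-- The Gauss map `x ↦ {1/x}`. -/
noncomputable def gaussMap (x : ℝ) : ℝ := Int.fract x⁻¹

/-- The `i`-th partial quotient `a_i` of the continued fraction
`α = [a_0, a_1, …] = 1/(a_0 + 1/(a_1 + ⋯))` of `α ∈ (0,1)`. -/
noncomputable def partialQuot (α : ℝ) (i : ℕ) : ℕ := (⌊(gaussMap^[i] α)⁻¹⌋).toNat

/-- `α` is of type bounded by `K`: all partial quotients are at most `K`. -/
def BddType (K : ℕ) (α : ℝ) : Prop := ∀ i : ℕ, partialQuot α i ≤ K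

/-- The horizontal strip `Π_ε = {z : |Im z| < ε}` (a lift of the cylinder). -/
def Strip (ε : ℝ) : Set ℂ := {z : ℂ | |z.im| < ε}

/-- Bounded continuous functions on the closed strip, with the sup norm. -/
abbrev StripFun (ε : ℝ) := BoundedContinuousFunction (closure (Strip ε)) ℂ

/-- `u` is (the boundary extension of) a holomorphic function on the open strip. -/
def IsHolo (ε : ℝ) (u : StripFun ε) : Prop :=
  ∃ g : ℂ → ℂ, DifferentiableOn ℂ g (Strip ε) ∧ ∀ z : closure (Strip ε), g z = u z

/-- `u` is `1`-periodic. -/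
def IsPeriodic (ε : ℝ) (u : StripFun ε) : Prop :=
  ∀ (z : ℂ) (h1 : z ∈ closure (Strip ε)) (h2 : z + 1 ∈ closure (Strip ε)),
    u ⟨z + 1, h2⟩ = u ⟨z, h1⟩

/-- The Banach space `E` of `1`-periodic holomorphic functions on `Π_ε` which are
continuous and bounded on the closed strip, with the sup norm, realized as a subspace of
the bounded continuous functions on the closed strip. -/
noncomputable def DSpace (ε : ℝ) : Submodule ℂ (StripFun ε) where
  carrier := {u | IsHolo ε u ∧ IsPeriodic ε u}
  add_mem' := by
    rintro u v ⟨⟨g, hg, hgu⟩, hu⟩ ⟨⟨g', hg', hgv⟩, hv⟩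
    refine ⟨⟨g + g', hg.add hg', fun z => ?_⟩, fun z h1 h2 => ?_⟩
    · simp [hgu z, hgv z]
    · simp [hu z h1 h2, hv z h1 h2]
  zero_mem' := by
    refine ⟨⟨fun _ => 0, differentiableOn_const 0, fun z => ?_⟩, fun z h1 h2 => ?_⟩ <;> simp
  smul_mem' := by
    rintro c u ⟨⟨g, hg, hgu⟩, hu⟩
    refine ⟨⟨c • g, hg.const_smul c, fun z => ?_⟩, fun z h1 h2 => ?_⟩
    · simp [hgu z]
    · simp [hu z h1 h2]

lemma const_mem_DSpace (ε : ℝ) (α : ℝ) :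
    BoundedContinuousFunction.const (↥(closure (Strip ε))) ((α : ℂ)) ∈ DSpace ε :=
  ⟨⟨fun _ => (α : ℂ), differentiableOn_const _, fun _ => rfl⟩, fun _ _ _ => rfl⟩

/-- The rotation `R_α`, i.e. the constant function `α`, as an element of `E`. -/
noncomputable def rotConst (ε : ℝ) (α : ℝ) : DSpace ε :=
  ⟨BoundedContinuousFunction.const _ (α : ℂ), const_mem_DSpace ε α⟩

open Classical in
/-- The circle map `F_u(z) = z + u(z)` associated to `u ∈ E`. -/
noncomputable def Fmap (ε : ℝ) (u : DSpace ε) (z : ℂ) : ℂ :=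
  if h : z ∈ closure (Strip ε) then z + (u : StripFun ε) ⟨z, h⟩ else z

/-- `F_u` is conformally conjugate to the rotation `R_α` on `Π_{ε/2}`. -/
def Linearizable (ε α : ℝ) (u : DSpace ε) : Prop :=
  ∃ Φ : ℂ → ℂ, DifferentiableOn ℂ Φ (Strip (ε / 2)) ∧ Set.InjOn Φ (Strip (ε / 2)) ∧
    (∀ z ∈ Strip (ε / 2), Φ (z + 1) = Φ z + 1) ∧
    (∀ z ∈ Strip (ε / 2), Fmap ε u z ∈ Strip (ε / 2) →
      Φ (Fmap ε u z) = Φ z + (α : ℂ))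


section LpLayer
open scoped ENNReal

/-- The sequence space `ℓ¹(ℤ)`. -/
noncomputable abbrev XSp := lp (fun _ : ℤ => ℂ) 1

/-- Basis vectors. -/
noncomputable def eb (k : ℤ) : XSp := lp.single 1 k 1

lemma norm_eb (k : ℤ) : ‖eb k‖ = 1 := by
  simp [eb, lp.norm_single]

lemma X_summable (x : XSp) : Summable (fun k => ‖x k‖) := by
  have := lp.hasSum_norm (p := 1) (by simp) x
  simpa using this.summable

lemma X_norm (x : XSp) : ‖x‖ = ∑' k, ‖x k‖ := by
  have := lp.norm_eq_tsum_rpow (p := 1) (by simp) x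
  simpa using this

lemma X_hasSum (x : XSp) : HasSum (fun k => x k • eb k) x := by
  have := lp.hasSum_single (p := 1) (by simp) x
  convert! this using 2 with k
  rw [eb, ← lp.single_smul]; simp

variable {Y : Type*} [NormedAddCommGroup Y] [NormedSpace ℂ Y]

lemma X_ext {S T : XSp →L[ℂ] Y} (h : ∀ k, S (eb k) = T (eb k)) : S = T := by
  ext1 x
  have h1 := S.hasSum (X_hasSum x)
  have h2 := T.hasSum (X_hasSum x)
  have : (fun k => S (x k • eb k)) = fun k => T (x k • eb k) := by
    funext k; simp [h k]
  rw [← this] at h2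
  exact h1.unique h2

variable [CompleteSpace Y]

lemma lift_summable {v : ℤ → Y} {C : ℝ} (hv : ∀ k, ‖v k‖ ≤ C) (x : XSp) :
    Summable (fun k => x k • v k) := by
  refine Summable.of_norm_bounded ((X_summable x).mul_right C) fun k => ?_
  rw [norm_smul]; gcongr; exact hv k

open Classical in
/-- The linear extension of a bounded family. -/
noncomputable def liftX (v : ℤ → Y) : XSp →L[ℂ] Y :=
  if h : ∃ C, ∀ k, ‖v k‖ ≤ C then
    LinearMap.mkContinuous
      { toFun := fun x => ∑' k, x k • v k
        map_add' := fun x y => by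
          obtain ⟨C, hC⟩ := h
          rw [← (lift_summable hC x).tsum_add (lift_summable hC y)]
          simp [add_smul]
        map_smul' := fun c x => by
          obtain ⟨C, hC⟩ := h
          simp only [RingHom.id_apply]
          rw [← (lift_summable hC x).tsum_const_smul]
          simp [mul_smul] } h.choose (fun x => by
            have hC := h.choose_spec
            set C := h.choose
            simp only [LinearMap.coe_mk, AddHom.coe_mk]
            rw [X_norm, ← tsum_mul_left]
            refine tsum_of_norm_bounded ((X_summable x).mul_left C).hasSum fun k => ?_
            rw [norm_smul, mul_comm]; gcongr; exact hC k)
  else 0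

lemma liftX_apply {v : ℤ → Y} {C : ℝ} (hv : ∀ k, ‖v k‖ ≤ C) (x : XSp) :
    liftX v x = ∑' k, x k • v k := by
  have : ∃ C, ∀ k, ‖v k‖ ≤ C := ⟨C, hv⟩
  simp only [liftX, dif_pos this]; rfl

lemma norm_liftX_le {v : ℤ → Y} {C : ℝ} (hv : ∀ k, ‖v k‖ ≤ C) : ‖liftX v‖ ≤ C := by
  have hC : 0 ≤ C := (norm_nonneg _).trans (hv 0)
  refine ContinuousLinearMap.opNorm_le_bound _ hC fun x => ?_
  rw [liftX_apply hv, X_norm, ← tsum_mul_left]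
  refine tsum_of_norm_bounded ((X_summable x).mul_left C).hasSum fun k => ?_
  rw [norm_smul, mul_comm]; gcongr; exact hv k

lemma liftX_eb {v : ℤ → Y} {C : ℝ} (hv : ∀ k, ‖v k‖ ≤ C) (k : ℤ) :
    liftX v (eb k) = v k := by
  rw [liftX_apply hv, tsum_eq_single k]
  · simp [eb]
  · intro j hj
    simp [eb, hj]

/-- Diagonal operator. -/
noncomputable def diagX (d : ℤ → ℂ) : XSp →L[ℂ] XSp := liftX (fun k => d k • eb k)

lemma diagX_aux {d : ℤ → ℂ} {C : ℝ} (hd : ∀ k, ‖d k‖ ≤ C) (k : ℤ) : ‖d k • eb k‖ ≤ C := by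
  rw [norm_smul, norm_eb, mul_one]; exact hd k

lemma diagX_eb {d : ℤ → ℂ} {C : ℝ} (hd : ∀ k, ‖d k‖ ≤ C) (k : ℤ) :
    diagX d (eb k) = d k • eb k := liftX_eb (diagX_aux hd) k

lemma norm_diagX_le {d : ℤ → ℂ} {C : ℝ} (hd : ∀ k, ‖d k‖ ≤ C) : ‖diagX d‖ ≤ C :=
  norm_liftX_le (diagX_aux hd)

/-- Coefficient functional. -/
noncomputable def coeX (k : ℤ) : XSp →L[ℂ] ℂ := liftX (fun j => if j = k then 1 else 0)

lemma coeX_bd (k : ℤ) (j : ℤ) : ‖(if j = k then 1 else 0 : ℂ)‖ ≤ 1 := by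
  split_ifs <;> simp

lemma coeX_eb (k j : ℤ) : coeX k (eb j) = if j = k then 1 else 0 := liftX_eb (coeX_bd k) j

lemma norm_coeX_le (k : ℤ) : ‖coeX k‖ ≤ 1 := norm_liftX_le (coeX_bd k)

/-- The multiplication weights. -/
noncomputable def wt (δ : ℝ) (k j : ℤ) : ℂ :=
  (Real.exp (-(2 * Real.pi * δ) * (|(j : ℝ)| + |(k : ℝ)| - |((k + j : ℤ) : ℝ)|)) : ℝ)

lemma wt_bd {δ : ℝ} (hδ : 0 ≤ δ) (k j : ℤ) : ‖wt δ k j‖ ≤ 1 := by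
  rw [wt, Complex.norm_real, Real.norm_eq_abs, Real.abs_exp, Real.exp_le_one_iff]
  have h1 : |((k + j : ℤ) : ℝ)| ≤ |(k : ℝ)| + |(j : ℝ)| := by
    push_cast; exact abs_add_le _ _
  have h2 : 0 ≤ 2 * Real.pi * δ := by positivity
  nlinarith

/-- Weighted shift. -/
noncomputable def shX (δ : ℝ) (k : ℤ) : XSp →L[ℂ] XSp := liftX (fun j => wt δ k j • eb (k + j))

lemma shX_bd {δ : ℝ} (hδ : 0 ≤ δ) (k j : ℤ) : ‖wt δ k j • eb (k + j)‖ ≤ 1 := by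
  rw [norm_smul, norm_eb, mul_one]; exact wt_bd hδ k j

lemma norm_shX_le {δ : ℝ} (hδ : 0 ≤ δ) (k : ℤ) : ‖shX δ k‖ ≤ 1 := norm_liftX_le (shX_bd hδ k)

/-- Multiplication. -/
noncomputable def mulX (δ : ℝ) : XSp →L[ℂ] (XSp →L[ℂ] XSp) := liftX (shX δ)

lemma norm_mulX_le {δ : ℝ} (hδ : 0 ≤ δ) : ‖mulX δ‖ ≤ 1 := norm_liftX_le (norm_shX_le hδ)

lemma mulX_eb {δ : ℝ} (hδ : 0 ≤ δ) (k j : ℤ) : mulX δ (eb k) (eb j) = wt δ k j • eb (k + j) := by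
  rw [mulX, liftX_eb (norm_shX_le hδ), shX, liftX_eb (shX_bd hδ k)]

lemma mulX_zero_left {δ : ℝ} (hδ : 0 ≤ δ) : mulX δ (eb 0) = 1 := by
  apply X_ext; intro k
  rw [mulX_eb hδ]; simp [wt]

lemma mulX_zero_right {δ : ℝ} (hδ : 0 ≤ δ) (x : XSp) : mulX δ x (eb 0) = x := by
  have : (mulX δ).flip (eb 0) = ContinuousLinearMap.id ℂ XSp := by
    apply X_ext; intro k
    rw [ContinuousLinearMap.flip_apply, mulX_eb hδ]; simp [wt]
  simpa using congrArg (fun T => T x) this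

/-- The exponential `e^{2π i k z}` normalized. -/
noncomputable def chr (r : ℝ) (z : ℂ) (k : ℤ) : ℂ :=
  Complex.exp (2 * Real.pi * Complex.I * k * z - 2 * Real.pi * r * |(k : ℝ)|)

lemma chr_bd' {r s : ℝ} {z : ℂ} (hz : |z.im| ≤ s) (k : ℤ) :
    ‖chr r z k‖ ≤ Real.exp (-(2 * Real.pi * (r - s) * |(k : ℝ)|)) := by
  rw [chr, Complex.norm_exp, Real.exp_le_exp]
  have h : (2 * Real.pi * Complex.I * k * z - 2 * Real.pi * r * |(k : ℝ)| : ℂ).re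
      = -(2 * Real.pi * (k * z.im)) - 2 * Real.pi * r * |(k : ℝ)| := by
    simp [Complex.mul_re, Complex.mul_im]; ring
  rw [h]
  have h1 : -(k * z.im) ≤ |(k : ℝ)| * s := by
    calc -(k * z.im) ≤ |(k : ℝ) * z.im| := neg_le_abs _
      _ = |(k : ℝ)| * |z.im| := abs_mul _ _
      _ ≤ _ := by gcongr
  nlinarith [Real.pi_pos]

lemma chr_bd {r : ℝ} {z : ℂ} (hz : |z.im| ≤ r) (k : ℤ) : ‖chr r z k‖ ≤ 1 := by
  simpa using chr_bd' (r := r) hz k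

/-- Evaluation of the function represented by a sequence. -/
noncomputable def evX (r : ℝ) (z : ℂ) : XSp →L[ℂ] ℂ := liftX (chr r z)

lemma evX_eb {r : ℝ} {z : ℂ} (hz : |z.im| ≤ r) (k : ℤ) : evX r z (eb k) = chr r z k :=
  liftX_eb (chr_bd hz) k

lemma evX_apply {r : ℝ} {z : ℂ} (hz : |z.im| ≤ r) (x : XSp) :
    evX r z x = ∑' k, x k * chr r z k := liftX_apply (chr_bd hz) x

lemma evX_le {r : ℝ} {z : ℂ} (hz : |z.im| ≤ r) (x : XSp) : ‖evX r z x‖ ≤ ‖x‖ := by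
  refine ((evX r z).le_opNorm x).trans ?_
  have := norm_liftX_le (chr_bd hz)
  calc _ ≤ 1 * ‖x‖ := by gcongr; exact this
    _ = _ := one_mul _

lemma evX_zero {r : ℝ} {z : ℂ} (hz : |z.im| ≤ r) : evX r z (eb 0) = 1 := by
  rw [evX_eb hz]; simp [chr]

lemma chr_wt (δ : ℝ) (z : ℂ) (k j : ℤ) :
    wt δ k j * chr δ z (k + j) = chr δ z k * chr δ z j := by
  rw [wt, chr, chr, chr, Complex.ofReal_exp, ← Complex.exp_add, ← Complex.exp_add]
  congr 1; push_cast; ring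

lemma evX_mul {δ : ℝ} (hδ : 0 ≤ δ) {z : ℂ} (hz : |z.im| ≤ δ) (a b : XSp) :
    evX δ z (mulX δ a b) = evX δ z a * evX δ z b := by
  have h1 : ∀ j, (evX δ z).comp ((mulX δ).flip (eb j)) = chr δ z j • evX δ z := by
    intro j
    apply X_ext; intro k
    simp [mulX_eb hδ, evX_eb hz, chr_wt, mul_comm]
  have h2 : (evX δ z).comp (mulX δ a) = (evX δ z a) • evX δ z := by
    apply X_ext; intro j
    have := congrArg (fun T => T a) (h1 j)
    simpa [evX_eb hz, mul_comm] using this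
  simpa using congrArg (fun T => T b) h2

lemma evX_add_one {r : ℝ} {z : ℂ} (x : XSp) : evX r (z + 1) x = evX r z x := by
  have : chr r (z + 1) = chr r z := by
    funext k
    rw [chr, chr, show (2 * Real.pi * Complex.I * k * (z + 1) - 2 * Real.pi * r * |(k : ℝ)| : ℂ)
      = (2 * Real.pi * Complex.I * k * z - 2 * Real.pi * r * |(k : ℝ)|)
        + k * (2 * Real.pi * Complex.I) by ring, Complex.exp_add, Complex.exp_int_mul_two_pi_mul_I,
        mul_one]
  rw [evX, this, evX]

lemma evX_exp {δ : ℝ} (hδ : 0 ≤ δ) {z : ℂ} (hz : |z.im| ≤ δ) (a b : XSp) :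
    evX δ z (NormedSpace.exp (mulX δ a) b) = Complex.exp (evX δ z a) * evX δ z b := by
  have h1 := NormedSpace.exp_series_hasSum_exp' (𝕂 := ℂ) (mulX δ a)
  have h2 := (((evX δ z).comp (ContinuousLinearMap.apply ℂ XSp b))).hasSum h1
  have h3 := (NormedSpace.exp_series_hasSum_exp' (𝕂 := ℂ) (evX δ z a)).mul_right (evX δ z b)
  rw [← Complex.exp_eq_exp_ℂ] at h3
  have hp : ∀ n : ℕ, evX δ z (((mulX δ a) ^ n) b) = (evX δ z a) ^ n * evX δ z b := by
    intro n
    induction n with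
    | zero => simp
    | succ n ih =>
      rw [pow_succ', mul_apply_eq_comp, evX_mul hδ hz, ih]; ring
  refine h2.unique ?_
  convert! h3 using 2 with n
  simp only [ContinuousLinearMap.comp_apply, map_smul, ContinuousLinearMap.apply_apply, hp,
    smul_eq_mul, mul_assoc]

end LpLayer


section DerivLayer
open scoped ENNReal NNReal Nat Topology

/-- `2π i k`. -/
noncomputable def tpik (k : ℤ) : ℂ := 2 * Real.pi * Complex.I * k

lemma norm_tpik (k : ℤ) : ‖tpik k‖ = 2 * Real.pi * |(k : ℝ)| := by
  simp [tpik, abs_of_pos Real.pi_pos]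

/-- Coefficients of the damped `n`-th derivative divided by `n!`. -/
noncomputable def dn (n : ℕ) (τ : ℝ) (k : ℤ) : ℂ :=
  tpik k ^ n / (n ! : ℂ) * (Real.exp (-(2 * Real.pi * τ * |(k : ℝ)|)) : ℝ)

lemma dn_real_bd {τ : ℝ} (hτ : 0 < τ) (n : ℕ) (t : ℝ) (ht : 0 ≤ t) :
    t ^ n / (n ! : ℝ) * Real.exp (-(τ * t)) ≤ (τ⁻¹) ^ n := by
  have h := Real.pow_div_factorial_le_exp (τ * t) (by positivity) n
  rw [Real.exp_neg, ← div_eq_mul_inv, div_le_iff₀ (Real.exp_pos _)]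
  calc t ^ n / (n ! : ℝ) = (τ⁻¹) ^ n * ((τ * t) ^ n / (n ! : ℝ)) := by
        rw [mul_pow, inv_pow]; field_simp
    _ ≤ _ := by gcongr

lemma dn_bd {τ : ℝ} (hτ : 0 < τ) (n : ℕ) (k : ℤ) : ‖dn n τ k‖ ≤ (τ⁻¹) ^ n := by
  have h := dn_real_bd hτ n (2 * Real.pi * |(k : ℝ)|) (by positivity)
  rw [dn, norm_mul, norm_div, norm_pow, norm_tpik, Complex.norm_real, Real.norm_eq_abs,
    Real.abs_exp, Complex.norm_natCast]
  convert! h using 3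
  ring

/-- Derivative of evaluation. -/
noncomputable def devX (r : ℝ) (z : ℂ) : XSp →L[ℂ] ℂ := liftX (fun k => tpik k * chr r z k)

lemma devX_bd {r s : ℝ} {z : ℂ} (hs : s < r) (hz : |z.im| ≤ s) (k : ℤ) :
    ‖tpik k * chr r z k‖ ≤ (r - s)⁻¹ := by
  have h := dn_real_bd (sub_pos.2 hs) 1 (2 * Real.pi * |(k : ℝ)|) (by positivity)
  rw [norm_mul, norm_tpik]
  calc _ ≤ 2 * Real.pi * |(k : ℝ)| * Real.exp (-(2 * Real.pi * (r - s) * |(k : ℝ)|)) := by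
        gcongr; exact chr_bd' hz k
    _ ≤ _ := by
        convert! h using 1
        · simp only [pow_one, Nat.factorial_one, Nat.cast_one, div_one]; ring_nf
        · simp

lemma devX_eb {r : ℝ} {z : ℂ} (hz : |z.im| < r) (k : ℤ) :
    devX r z (eb k) = tpik k * chr r z k :=
  liftX_eb (devX_bd hz le_rfl) k

lemma isOpen_Strip (r : ℝ) : IsOpen (Strip r) := by
  unfold Strip
  exact isOpen_lt (by fun_prop) continuous_const

lemma convex_Strip (r : ℝ) : Convex ℝ (Strip r) := by
  have : Strip r = Complex.imLm ⁻¹' (Set.Ioo (-r) r) := by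
    ext z; simp [Strip, abs_lt]
  rw [this]
  exact (convex_Ioo _ _).is_linear_preimage Complex.imLm.isLinear

lemma hasDerivAt_evX {r : ℝ} {z : ℂ} (hz : |z.im| < r) (x : XSp) :
    HasDerivAt (fun w => evX r w x) (devX r z x) z := by
  obtain ⟨s, hzs, hsr⟩ := exists_between hz
  have key := hasDerivAt_tsum_of_isPreconnected (u := fun k => ‖x k‖ * (r - s)⁻¹)
    (g := fun k w => x k * chr r w k) (g' := fun k w => x k * (tpik k * chr r w k))
    (t := Strip s) (y₀ := z) (y := z) ((X_summable x).mul_right _) (isOpen_Strip s)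
    (convex_Strip s).isPreconnected (by
      intro k y _
      apply HasDerivAt.const_mul
      have h1 : HasDerivAt (fun w : ℂ =>
          (2 * Real.pi * Complex.I * k * w - 2 * Real.pi * r * |(k : ℝ)| : ℂ)) (tpik k) y := by
        have := ((hasDerivAt_id y).const_mul (2 * Real.pi * Complex.I * k : ℂ)).sub_const
          (2 * Real.pi * r * |(k : ℝ)| : ℂ)
        simp only [mul_one, id] at this
        exact this
      have := h1.cexp
      rw [mul_comm (Complex.exp _)] at this
      exact this) (by
      intro k y hy
      rw [norm_mul]; gcongr
      exact devX_bd hsr (le_of_lt hy) k) hzs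
      (lift_summable (chr_bd hz.le) x) hzs
  rw [devX, liftX_apply (devX_bd hz le_rfl)]
  refine key.congr_of_eventuallyEq ?_
  filter_upwards [(isOpen_Strip s).mem_nhds hzs] with w hw
  exact evX_apply (hw.le.trans hsr.le) x

lemma chr_add (r τ : ℝ) (z : ℂ) (k : ℤ) :
    chr (r + τ) z k = (Real.exp (-(2 * Real.pi * τ * |(k : ℝ)|)) : ℝ) * chr r z k := by
  rw [chr, chr, Complex.ofReal_exp, ← Complex.exp_add]
  congr 1; push_cast; ring

lemma evX_D0 {r τ : ℝ} (hτ : 0 < τ) {z : ℂ} (hz : |z.im| ≤ r) (x : XSp) :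
    evX r z (diagX (dn 0 τ) x) = evX (r + τ) z x := by
  have : (evX r z).comp (diagX (dn 0 τ)) = evX (r + τ) z := by
    apply X_ext; intro k
    rw [ContinuousLinearMap.comp_apply, diagX_eb (dn_bd hτ 0), map_smul, evX_eb hz,
      evX_eb (hz.trans (by linarith)), chr_add]
    simp [dn]
  simpa using congrArg (fun T => T x) this

lemma evX_D1 {r τ : ℝ} (hτ : 0 < τ) {z : ℂ} (hz : |z.im| ≤ r) (x : XSp) :
    evX r z (diagX (dn 1 τ) x) = devX (r + τ) z x := by
  have : (evX r z).comp (diagX (dn 1 τ)) = devX (r + τ) z := by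
    apply X_ext; intro k
    rw [ContinuousLinearMap.comp_apply, diagX_eb (dn_bd hτ 1), map_smul, evX_eb hz,
      devX_eb (hz.trans_lt (by linarith)), chr_add]
    simp [dn]; ring
  simpa using congrArg (fun T => T x) this

lemma evX_D2 {r τ : ℝ} (hτ : 0 < τ) {z : ℂ} (hz : |z.im| < r) (x : XSp) :
    2 * evX r z (diagX (dn 2 τ) x) = devX r z (diagX (dn 1 τ) x) := by
  have : (2 : ℂ) • (evX r z).comp (diagX (dn 2 τ)) = (devX r z).comp (diagX (dn 1 τ)) := by
    apply X_ext; intro k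
    rw [smul_apply, ContinuousLinearMap.comp_apply,
      ContinuousLinearMap.comp_apply, diagX_eb (dn_bd hτ 1), diagX_eb (dn_bd hτ 2),
      map_smul, map_smul, evX_eb hz.le, devX_eb hz]
    simp [dn]; ring
  simpa using congrArg (fun T => T x) this

/-- Antiderivative coefficients. -/
noncomputable def iD (k : ℤ) : ℂ := (tpik k)⁻¹

lemma one_le_abs_int {k : ℤ} (hk : k ≠ 0) : (1 : ℝ) ≤ |(k : ℝ)| := by
  have := Int.one_le_abs hk
  exact_mod_cast this

lemma tpik_ne {k : ℤ} (hk : k ≠ 0) : tpik k ≠ 0 := by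
  rw [← norm_ne_zero_iff, norm_tpik]
  have := one_le_abs_int hk
  have := Real.pi_pos
  positivity

lemma iD_bd (k : ℤ) : ‖iD k‖ ≤ 1 := by
  by_cases hk : k = 0
  · simp [iD, hk, tpik]
  · rw [iD, norm_inv, norm_tpik]
    apply inv_le_one_of_one_le₀
    nlinarith [one_le_abs_int hk, Real.pi_gt_three]

lemma devX_I {r : ℝ} {z : ℂ} (hz : |z.im| < r) (x : XSp) :
    devX r z (diagX iD x) = evX r z x - coeX 0 x := by
  have : (devX r z).comp (diagX iD) = evX r z - coeX 0 := by
    apply X_ext; intro k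
    rw [ContinuousLinearMap.comp_apply, diagX_eb iD_bd, map_smul, devX_eb hz,
      sub_apply, evX_eb hz.le, coeX_eb]
    by_cases hk : k = 0
    · simp [iD, hk, tpik, chr]
    · have := tpik_ne hk
      simp [iD, hk]; field_simp
  simpa using congrArg (fun T => T x) this

/-- Small divisor coefficients. -/
noncomputable def jD (α : ℝ) (k : ℤ) : ℂ := (tpik k * (Complex.exp (tpik k * α) - 1))⁻¹

lemma evX_J {r : ℝ} {α : ℝ} {C : ℝ} (hJ : ∀ k, ‖jD α k‖ ≤ C)
    (hne : ∀ k, k ≠ 0 → Complex.exp (tpik k * α) - 1 ≠ 0) {z : ℂ} (hz : |z.im| ≤ r) (x : XSp) :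
    evX r (z + α) (diagX (jD α) x) = evX r z (diagX (jD α) x) + evX r z (diagX iD x) := by
  have hz' : |(z + α).im| ≤ r := by simpa using hz
  have : (evX r (z + α)).comp (diagX (jD α)) =
      (evX r z).comp (diagX (jD α)) + (evX r z).comp (diagX iD) := by
    apply X_ext; intro k
    have hc : chr r (z + α) k = Complex.exp (tpik k * α) * chr r z k := by
      rw [chr, chr, ← Complex.exp_add, tpik]; congr 1; ring
    simp only [add_apply, ContinuousLinearMap.comp_apply, diagX_eb iD_bd,
      diagX_eb hJ, map_smul, evX_eb hz', evX_eb hz, hc, smul_eq_mul]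
    by_cases hk : k = 0
    · simp [iD, hk, tpik, jD]
    · have := tpik_ne hk
      have := hne k hk
      simp only [iD, jD]; field_simp; ring
  simpa using congrArg (fun T => T x) this

end DerivLayer

section CompLayer
open scoped ENNReal NNReal Nat Topology

lemma exists_compSer {X 𝔸 : Type*} [NormedAddCommGroup X] [NormedSpace ℂ X]
    [NormedRing 𝔸] [NormOneClass 𝔸] [NormedAlgebra ℂ 𝔸] [CompleteSpace 𝔸] (Λ : ℕ → X →L[ℂ] 𝔸)
    {σ : ℝ} (hσ : 0 < σ) (hΛ : ∀ n, ‖Λ n‖ ≤ (σ⁻¹) ^ n) :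
    ∃ C : 𝔸 → (X →L[ℂ] 𝔸), AnalyticAt ℂ C 0 ∧
      ∀ B, ‖B‖ < σ → ∀ x, HasSum (fun n => Λ n x * B ^ n) (C B x) := by
  set p : FormalMultilinearSeries ℂ 𝔸 (X →L[ℂ] 𝔸) := fun n =>
    (((ContinuousLinearMap.compL ℂ X 𝔸 𝔸).flip (Λ n)).comp
      (ContinuousLinearMap.mul ℂ 𝔸).flip).compContinuousMultilinearMap
        (ContinuousMultilinearMap.mkPiAlgebraFin ℂ n 𝔸) with hp
  have happ : ∀ n m x, p n m x = Λ n x * (List.ofFn m).prod := by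
    intro n m x; simp [hp]
  have hbd : ∀ n, ‖p n‖ ≤ (σ⁻¹) ^ n := by
    intro n
    refine ContinuousMultilinearMap.opNorm_le_bound (by positivity) fun m => ?_
    refine ContinuousLinearMap.opNorm_le_bound _ (by positivity) fun x => ?_
    rw [happ]
    have h1 : ‖(List.ofFn m).prod‖ ≤ ∏ i, ‖m i‖ := by
      simpa using (ContinuousMultilinearMap.mkPiAlgebraFin ℂ n 𝔸).le_of_opNorm_le
        (C := 1) (by simp) m
    have h2 : ‖Λ n x‖ ≤ (σ⁻¹) ^ n * ‖x‖ := (Λ n).le_of_opNorm_le (hΛ n) _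
    calc _ ≤ ‖Λ n x‖ * ‖(List.ofFn m).prod‖ := norm_mul_le _ _
      _ ≤ ((σ⁻¹) ^ n * ‖x‖) * ∏ i, ‖m i‖ := by gcongr
      _ = _ := by ring
  have hr : ENNReal.ofReal σ ≤ p.radius := by
    refine FormalMultilinearSeries.le_radius_of_bound _ 1 fun n => ?_
    rw [Real.coe_toNNReal _ hσ.le]
    calc _ ≤ (σ⁻¹) ^ n * σ ^ n := by gcongr; exact hbd n
      _ = 1 := by rw [← mul_pow, inv_mul_cancel₀ hσ.ne', one_pow]
      _ ≤ 1 := le_rfl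
  have hpos : 0 < ENNReal.ofReal σ := by simpa using hσ
  have hF : HasFPowerSeriesOnBall p.sum p 0 (ENNReal.ofReal σ) :=
    (p.hasFPowerSeriesOnBall (hpos.trans_le hr)).mono hpos hr
  refine ⟨p.sum, hF.analyticAt, fun B hB x => ?_⟩
  have hmem : B ∈ Metric.eball (0 : 𝔸) (ENNReal.ofReal σ) := by
    simp only [Metric.mem_eball, edist_zero_right, ← ofReal_norm]
    exact (ENNReal.ofReal_lt_ofReal_iff hσ).2 hB
  have hs := hF.hasSum hmem
  rw [zero_add] at hs
  have := (ContinuousLinearMap.apply ℂ 𝔸 x).hasSum hs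
  simpa [happ] using this

lemma mulD_bd {δ σ : ℝ} (hδ : 0 ≤ δ) (hσ : 0 < σ) (n : ℕ) :
    ‖(mulX δ).comp (diagX (dn n σ))‖ ≤ (σ⁻¹) ^ n := by
  refine (ContinuousLinearMap.opNorm_comp_le _ _).trans ?_
  calc _ ≤ 1 * (σ⁻¹) ^ n := by
        gcongr
        · exact norm_mulX_le hδ
        · exact norm_diagX_le (dn_bd hσ n)
    _ = _ := one_mul _

instance : Nontrivial XSp := ⟨⟨eb 0, 0, fun h => by simpa [norm_eb] using congrArg norm h⟩⟩

lemma exists_compX {δ σ : ℝ} (hδ : 0 ≤ δ) (hσ : 0 < σ) :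
    ∃ C : (XSp →L[ℂ] XSp) → (XSp →L[ℂ] (XSp →L[ℂ] XSp)), AnalyticAt ℂ C 0 ∧
      ∀ B, ‖B‖ < σ → ∀ x, HasSum (fun n => mulX δ (diagX (dn n σ) x) * B ^ n) (C B x) :=
  exists_compSer (X := XSp) (𝔸 := XSp →L[ℂ] XSp) (fun n => (mulX δ).comp (diagX (dn n σ))) hσ
    (mulD_bd hδ hσ)

open Classical in
/-- Composition operator. -/
noncomputable def compX (δ σ : ℝ) : (XSp →L[ℂ] XSp) → (XSp →L[ℂ] (XSp →L[ℂ] XSp)) :=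
  if h : 0 ≤ δ ∧ 0 < σ then (exists_compX h.1 h.2).choose else 0

lemma compX_spec {δ σ : ℝ} (hδ : 0 ≤ δ) (hσ : 0 < σ) : AnalyticAt ℂ (compX δ σ) 0 ∧
      ∀ B, ‖B‖ < σ → ∀ x, HasSum (fun n => mulX δ (diagX (dn n σ) x) * B ^ n)
        (compX δ σ B x) := by
  have h : 0 ≤ δ ∧ 0 < σ := ⟨hδ, hσ⟩
  simp only [compX, dif_pos h]
  exact (exists_compX h.1 h.2).choose_spec

lemma evX_comp {δ σ : ℝ} (hδ : 0 ≤ δ) (hσ : 0 < σ) {z : ℂ} (hz : |z.im| ≤ δ) (a x : XSp)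
    (ha : ‖a‖ < σ) :
    evX δ z (compX δ σ (mulX δ a) x (eb 0)) = evX (δ + σ) (z + evX δ z a) x := by
  have hB : ‖mulX δ a‖ < σ := by
    refine lt_of_le_of_lt ?_ ha
    simpa using (mulX δ).le_of_opNorm_le (norm_mulX_le hδ) a
  have hs := (compX_spec hδ hσ).2 _ hB
  have him : |(z + evX δ z a).im| ≤ δ + σ := by
    rw [Complex.add_im]
    refine (abs_add_le _ _).trans (add_le_add hz ?_)
    exact (Complex.abs_im_le_norm _).trans ((evX_le hz a).trans ha.le)
  have : ((evX δ z).comp (ContinuousLinearMap.apply ℂ XSp (eb 0))).comp (compX δ σ (mulX δ a))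
      = evX (δ + σ) (z + evX δ z a) := by
    apply X_ext; intro k
    have h1 := ((evX δ z).comp (ContinuousLinearMap.apply ℂ XSp (eb 0))).hasSum (hs (eb k))
    have h2 := (NormedSpace.exp_series_hasSum_exp' (𝕂 := ℂ) (tpik k * evX δ z a)).mul_right
      (chr (δ + σ) z k)
    rw [← Complex.exp_eq_exp_ℂ] at h2
    have hp : ∀ n : ℕ, ∀ b : XSp,
        evX δ z (((mulX δ a) ^ n) b) = (evX δ z a) ^ n * evX δ z b := by
      intro n b
      induction n with
      | zero => simp
      | succ n ih =>
        rw [pow_succ', mul_apply_eq_comp, evX_mul hδ hz, ih]; ring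
    have h3 : evX (δ + σ) (z + evX δ z a) (eb k)
        = Complex.exp (tpik k * evX δ z a) * chr (δ + σ) z k := by
      rw [evX_eb him, chr, chr, ← Complex.exp_add, tpik]; congr 1; ring
    rw [h3]
    refine h1.unique ?_
    convert! h2 using 2 with n
    simp only [ContinuousLinearMap.comp_apply, ContinuousLinearMap.apply_apply,
      mul_apply_eq_comp, evX_mul hδ hz, hp, evX_zero hz, diagX_eb (dn_bd hσ n), map_smul,
      smul_apply, evX_eb hz, smul_eq_mul, dn, chr_add]
    ring
  simpa using congrArg (fun T => T x) this

end CompLayer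


section Dioph

lemma gauss_irr {x : ℝ} (hx : Irrational x) : Irrational (gaussMap x) := by
  have h : Irrational x⁻¹ := by simpa using hx
  unfold gaussMap Int.fract
  exact h.sub_intCast _

lemma gauss_mem {x : ℝ} (hx : Irrational x) : gaussMap x ∈ Set.Ioo (0 : ℝ) 1 := by
  have h := gauss_irr hx
  refine ⟨lt_of_le_of_ne (Int.fract_nonneg _) ?_, Int.fract_lt_one _⟩
  exact h.ne_zero.symm

lemma gauss_bdd {K : ℕ} {x : ℝ} (hb : BddType K x) : BddType K (gaussMap x) := by
  intro i
  have := hb (i + 1)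
  rwa [partialQuot, Function.iterate_succ_apply] at this

lemma floor_facts {K : ℕ} {x : ℝ} (hx : x ∈ Set.Ioo (0 : ℝ) 1) (hb : BddType K x) :
    ∃ a : ℕ, 1 ≤ a ∧ a ≤ K ∧ x⁻¹ = a + gaussMap x := by
  refine ⟨⌊x⁻¹⌋.toNat, ?_, ?_, ?_⟩
  · have h1 : (1 : ℤ) ≤ ⌊x⁻¹⌋ := by
      rw [Int.le_floor]; push_cast
      exact (one_lt_inv₀ hx.1).2 hx.2 |>.le
    omega
  · simpa [partialQuot] using hb 0
  · have h1 : (0 : ℤ) ≤ ⌊x⁻¹⌋ := Int.floor_nonneg.2 (inv_nonneg.2 hx.1.le)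
    have h2 : ((⌊x⁻¹⌋.toNat : ℕ) : ℝ) = (⌊x⁻¹⌋ : ℝ) := by
      exact_mod_cast Int.toNat_of_nonneg h1
    rw [h2, gaussMap, Int.floor_add_fract]

lemma dio_core (K : ℕ) (n : ℕ) : ∀ x : ℝ, Irrational x → x ∈ Set.Ioo (0 : ℝ) 1 → BddType K x →
    ∀ s ∈ Set.Icc (0 : ℝ) 1, ∀ q p : ℕ, 1 ≤ q → p + q ≤ n →
      1 / (2 * (K + 1)) * (1 + x * s) ≤ |q * x - p| * (q + s * p) := by
  induction n with
  | zero => intro x _ _ _ s _ q p hq h; omega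
  | succ n ih =>
    intro x hirr hx hb s hs q p hq hn
    obtain ⟨a, ha1, haK, hax⟩ := floor_facts hx hb
    have hy := gauss_mem hirr
    have hyi := gauss_irr hirr
    have hyb := gauss_bdd hb
    set y := gaussMap x with hydef
    have hx0 := hx.1
    have hK : (0 : ℝ) < K + 1 := by positivity
    have hxK : 1 / ((K : ℝ) + 1) ≤ x := by
      rw [div_le_iff₀ hK]
      have h1 : x * x⁻¹ = 1 := mul_inv_cancel₀ hx0.ne'
      have h2 : x⁻¹ ≤ K + 1 := by
        rw [hax]
        have : (a : ℝ) ≤ K := by exact_mod_cast haK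
        linarith [hy.2]
      nlinarith
    have hc : 1 / (2 * ((K : ℝ) + 1)) * (1 + x * s) ≤ x := by
      have h1 : 1 + x * s ≤ 2 := by nlinarith [hx.2, hs.1, hs.2]
      calc 1 / (2 * ((K : ℝ) + 1)) * (1 + x * s) ≤ 1 / (2 * ((K : ℝ) + 1)) * 2 := by gcongr
        _ = 1 / ((K : ℝ) + 1) := by field_simp
        _ ≤ x := hxK
    have hq' : (1 : ℝ) ≤ q := by exact_mod_cast hq
    have hsp : 0 ≤ s * p := mul_nonneg hs.1 (by positivity)
    have hxa : x * (a + y) = 1 := by rw [← hax]; exact mul_inv_cancel₀ hx0.ne'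
    rcases Nat.eq_zero_or_pos p with hp | hp
    · subst hp
      refine hc.trans ?_
      simp only [Nat.cast_zero, sub_zero, mul_zero, add_zero]
      rw [abs_of_pos (by positivity)]
      have : 0 ≤ x * (q - 1) := mul_nonneg hx0.le (by linarith)
      nlinarith [mul_nonneg this (by linarith : (0 : ℝ) ≤ q + 1)]
    · by_cases hqa : p * a ≤ q
      · -- descend
        obtain ⟨q', rfl⟩ := Nat.exists_eq_add_of_le hqa
        have ha' : (1 : ℝ) ≤ a := by exact_mod_cast ha1
        have has : 0 < a + s := by linarith [hs.1]
        have hle : q' + p ≤ n := by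
          have : p * 1 ≤ p * a := Nat.mul_le_mul_left _ ha1
          omega
        have h := ih y hyi hy hyb (1 / (a + s)) ⟨by positivity, by
          rw [div_le_one has]; linarith [hs.1]⟩ p q' hp hle
        have e1 : |((p * a + q' : ℕ) : ℝ) * x - p| = x * |p * y - q'| := by
          rw [← abs_of_pos hx0, ← abs_mul, abs_of_pos hx0, ← abs_neg]
          congr 1; push_cast
          linear_combination -(p : ℝ) * hxa
        have e2 : ((p * a + q' : ℕ) : ℝ) + s * p = (a + s) * (p + 1 / (a + s) * q') := by
          push_cast; field_simp; ring
        have e3 : 1 + x * s = x * (a + s) * (1 + y * (1 / (a + s))) := by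
          field_simp; linear_combination -hxa
        rw [e1, e2, e3]
        have hpos : 0 ≤ x * (a + s) := by positivity
        calc _ = x * (a + s) * (1 / (2 * ((K : ℝ) + 1)) * (1 + y * (1 / (a + s)))) := by ring
          _ ≤ x * (a + s) * (|p * y - q'| * (p + 1 / (a + s) * q')) := by gcongr
          _ = _ := by ring
      · refine hc.trans ?_
        have h1 : (q : ℝ) + 1 ≤ p * a := by
          have : q + 1 ≤ p * a := by omega
          exact_mod_cast this
        have h2 : x ≤ |q * x - p| := by
          rw [abs_sub_comm]
          refine le_trans ?_ (le_abs_self _)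
          have : x * (q + 1) ≤ x * (p * a) := by gcongr
          have h3 : x * (p * a) = p - p * (x * y) := by linear_combination (p : ℝ) * hxa
          have : 0 ≤ (p : ℝ) * (x * y) := by have := hy.1; positivity
          linarith
        calc x ≤ |q * x - p| := h2
          _ = |q * x - p| * 1 := (mul_one _).symm
          _ ≤ _ := by gcongr; linarith

lemma dio_nat {K : ℕ} {x : ℝ} (hirr : Irrational x) (hx : x ∈ Set.Ioo (0 : ℝ) 1)
    (hb : BddType K x) (q : ℕ) (hq : 1 ≤ q) (m : ℤ) :
    1 / (2 * ((K : ℝ) + 1)) ≤ |q * x - m| * q := by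
  have hq' : (1 : ℝ) ≤ q := by exact_mod_cast hq
  rcases le_or_gt 0 m with hm | hm
  · obtain ⟨p, rfl⟩ := Int.eq_ofNat_of_zero_le hm
    have := dio_core K (p + q) x hirr hx hb 0 (by simp) q p hq le_rfl
    simpa using this
  · have h1 : (m : ℝ) ≤ -1 := by exact_mod_cast (by omega : m ≤ -1)
    have h2 : 1 ≤ |q * x - m| := by
      refine le_trans ?_ (le_abs_self _)
      have : 0 ≤ q * x := mul_nonneg (by positivity) hx.1.le
      linarith
    have h3 : 1 / (2 * ((K : ℝ) + 1)) ≤ 1 := by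
      rw [div_le_one (by positivity)]
      have : (0 : ℝ) ≤ K := by positivity
      linarith
    nlinarith

lemma dio_int {K : ℕ} {x : ℝ} (hirr : Irrational x) (hx : x ∈ Set.Ioo (0 : ℝ) 1)
    (hb : BddType K x) (k : ℤ) (hk : k ≠ 0) (m : ℤ) :
    1 / (2 * ((K : ℝ) + 1)) ≤ |k * x - m| * |(k : ℝ)| := by
  have hn : 1 ≤ k.natAbs := Int.natAbs_pos.2 hk
  rcases le_or_gt 0 k with h | h
  · have hc : ((k.natAbs : ℕ) : ℝ) = k := by
      rw [Nat.cast_natAbs, abs_of_nonneg h]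
    have := dio_nat hirr hx hb k.natAbs hn m
    rw [hc] at this
    rwa [abs_of_nonneg (by exact_mod_cast h : (0 : ℝ) ≤ k)]
  · have hc : ((k.natAbs : ℕ) : ℝ) = -k := by
      rw [Nat.cast_natAbs, abs_of_neg h]; push_cast; rfl
    have := dio_nat hirr hx hb k.natAbs hn (-m)
    rw [hc] at this
    rw [abs_of_neg (by exact_mod_cast h : (k : ℝ) < 0), ← abs_neg]
    convert! this using 3
    push_cast; ring

lemma exp_sub_one_lower (t : ℝ) (m : ℤ) (hm : |t - m| ≤ 1 / 2) :
    4 * |t - m| ≤ ‖Complex.exp (2 * Real.pi * Complex.I * t) - 1‖ := by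
  set s := t - m with hs
  have h1 : Complex.exp (2 * Real.pi * Complex.I * t) = Complex.exp (Complex.I * (2 * Real.pi * s : ℝ)) := by
    rw [show (2 * Real.pi * Complex.I * t : ℂ) = Complex.I * (2 * Real.pi * s : ℝ)
      + m * (2 * Real.pi * Complex.I) by rw [hs]; push_cast; ring, Complex.exp_add,
      Complex.exp_int_mul_two_pi_mul_I, mul_one]
  rw [h1, Complex.norm_exp_I_mul_ofReal_sub_one, norm_mul]
  have h2 : 2 / Real.pi * |Real.pi * s| ≤ |Real.sin (Real.pi * s)| := by
    apply Real.mul_abs_le_abs_sin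
    rw [abs_mul, abs_of_pos Real.pi_pos]
    nlinarith [Real.pi_pos]
  rw [show 2 * Real.pi * s / 2 = Real.pi * s by ring]
  rw [abs_mul, abs_of_pos Real.pi_pos] at h2
  have h3 : 2 / Real.pi * (Real.pi * |s|) = 2 * |s| := by
    field_simp
  simp only [Real.norm_eq_abs, abs_two]
  linarith

lemma smalldiv {K : ℕ} {x : ℝ} (hirr : Irrational x) (hx : x ∈ Set.Ioo (0 : ℝ) 1)
    (hb : BddType K x) (k : ℤ) (hk : k ≠ 0) :
    2 / ((K : ℝ) + 1) ≤ ‖Complex.exp (tpik k * x) - 1‖ * |(k : ℝ)| := by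
  have h1 := exp_sub_one_lower (k * x) (round (k * x)) (abs_sub_round _)
  have h2 := dio_int hirr hx hb k hk (round (k * x))
  have h3 : (2 * Real.pi * Complex.I * ((k * x : ℝ) : ℂ) : ℂ) = tpik k * x := by
    rw [tpik]; push_cast; ring
  rw [h3] at h1
  calc 2 / ((K : ℝ) + 1) = 4 * (1 / (2 * ((K : ℝ) + 1))) := by field_simp; norm_num
    _ ≤ 4 * (|k * x - round (k * x)| * |(k : ℝ)|) := by gcongr
    _ = 4 * |k * x - round (k * x)| * |(k : ℝ)| := by ring
    _ ≤ _ := by gcongr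

lemma smalldiv_ne {K : ℕ} {x : ℝ} (hirr : Irrational x) (hx : x ∈ Set.Ioo (0 : ℝ) 1)
    (hb : BddType K x) (k : ℤ) (hk : k ≠ 0) : Complex.exp (tpik k * x) - 1 ≠ 0 := by
  intro h
  have := smalldiv hirr hx hb k hk
  rw [h, norm_zero, zero_mul] at this
  have : 0 < 2 / ((K : ℝ) + 1) := by positivity
  linarith

lemma jD_bd {K : ℕ} {x : ℝ} (hirr : Irrational x) (hx : x ∈ Set.Ioo (0 : ℝ) 1)
    (hb : BddType K x) (k : ℤ) : ‖jD x k‖ ≤ (K : ℝ) + 1 := by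
  by_cases hk : k = 0
  · simp [jD, hk, tpik]; positivity
  · have h := smalldiv hirr hx hb k hk
    rw [jD, norm_inv, norm_mul, norm_tpik]
    have hK : (0 : ℝ) < K + 1 := by positivity
    rw [inv_le_comm₀ (by
      have := norm_pos_iff.2 (smalldiv_ne hirr hx hb k hk)
      have := one_le_abs_int hk
      positivity) hK]
    calc ((K : ℝ) + 1)⁻¹ ≤ 2 * Real.pi * (2 / ((K : ℝ) + 1)) := by
          rw [inv_eq_one_div, ← mul_div_assoc]; gcongr; linarith [Real.pi_gt_three]
      _ ≤ 2 * Real.pi * (‖Complex.exp (tpik k * x) - 1‖ * |(k : ℝ)|) := by gcongr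
      _ = _ := by ring

end Dioph


section FourierLayer
open scoped ENNReal NNReal Nat Topology
open Filter Set

open Classical in
/-- Extension of `u` by zero outside of the closed strip. -/
noncomputable def extD (ε : ℝ) (u : DSpace ε) (z : ℂ) : ℂ :=
  if h : z ∈ closure (Strip ε) then (u : StripFun ε) ⟨z, h⟩ else 0

lemma extD_diff (ε : ℝ) (u : DSpace ε) : DifferentiableOn ℂ (extD ε u) (Strip ε) := by
  obtain ⟨⟨g, hg, hgu⟩, -⟩ := u.2
  refine hg.congr fun z hz => ?_
  have hz' := subset_closure hz
  rw [extD, dif_pos hz', ← hgu ⟨z, hz'⟩]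

lemma strip_add_real {ε : ℝ} {z : ℂ} (hz : z ∈ Strip ε) (t : ℝ) : z + t ∈ Strip ε := by
  simpa [Strip] using hz

lemma strip_add_one {ε : ℝ} {z : ℂ} (hz : z ∈ Strip ε) : z + 1 ∈ Strip ε := by
  simpa [Strip] using hz

lemma extD_per {ε : ℝ} (u : DSpace ε) {z : ℂ} (hz : z ∈ Strip ε) :
    extD ε u (z + 1) = extD ε u z := by
  have h1 := subset_closure hz
  have h2 := subset_closure (strip_add_one hz)
  rw [extD, dif_pos h2, extD, dif_pos h1]
  exact u.2.2 z h1 h2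

lemma extD_le (ε : ℝ) (u : DSpace ε) (z : ℂ) : ‖extD ε u z‖ ≤ ‖u‖ := by
  rw [extD]; split_ifs with h
  · exact BoundedContinuousFunction.norm_coe_le_norm (u : StripFun ε) ⟨z, h⟩
  · rw [norm_zero]; exact norm_nonneg u

lemma extD_add (ε : ℝ) (u v : DSpace ε) (z : ℂ) : extD ε (u + v) z = extD ε u z + extD ε v z := by
  simp only [extD]; split_ifs <;> simp

lemma extD_smul (ε : ℝ) (c : ℂ) (u : DSpace ε) (z : ℂ) : extD ε (c • u) z = c * extD ε u z := by
  simp only [extD]; split_ifs <;> simp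

lemma line_mem {ε y : ℝ} (hy : |y| < ε) (x : ℝ) : (x + y * Complex.I : ℂ) ∈ Strip ε := by
  simpa [Strip] using hy

lemma shift_contour {ε : ℝ} {f : ℂ → ℂ} (hf : DifferentiableOn ℂ f (Strip ε))
    (hp : ∀ z ∈ Strip ε, f (z + 1) = f z) {y : ℝ} (hy : |y| < ε) :
    ∫ x : ℝ in (0:ℝ)..1, f (x + y * Complex.I) = ∫ x : ℝ in (0:ℝ)..1, f x := by
  have hmem : ∀ t ∈ uIcc (0:ℝ) y, |t| < ε := by
    intro t ht
    refine lt_of_le_of_lt ?_ hy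
    have := abs_sub_left_of_mem_uIcc ht
    simpa using this
  have h := Complex.integral_boundary_rect_eq_zero_of_differentiableOn f 0 (1 + y * Complex.I)
    (hf.mono (by
      rintro z ⟨-, hz⟩
      have : z.im ∈ uIcc (0:ℝ) y := by simpa using hz
      exact hmem _ this))
  simp only [Complex.zero_re, Complex.zero_im, Complex.add_re, Complex.one_re, Complex.mul_re,
    Complex.ofReal_re, Complex.I_re, mul_zero, Complex.ofReal_im, Complex.I_im, mul_one, sub_self,
    add_zero, Complex.add_im, Complex.one_im, Complex.mul_im, zero_add, Complex.ofReal_zero,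
    zero_mul, Complex.ofReal_one] at h
  have e : ∫ t : ℝ in (0:ℝ)..y, f (1 + t * Complex.I) = ∫ t : ℝ in (0:ℝ)..y, f (t * Complex.I) := by
    refine intervalIntegral.integral_congr fun t ht => ?_
    have : (t * Complex.I : ℂ) ∈ Strip ε := by simpa [Strip] using hmem t ht
    rw [add_comm, hp _ this]
  rw [e] at h
  linear_combination -h

/-- The `k`-th Fourier coefficient. -/
noncomputable def cf (f : ℂ → ℂ) (k : ℤ) : ℂ :=
  ∫ x : ℝ in (0:ℝ)..1, f x * Complex.exp (-(tpik k * x))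

lemma exp_tpik_add_one (k : ℤ) (z : ℂ) : Complex.exp (tpik k * (z + 1)) = Complex.exp (tpik k * z) := by
  rw [mul_add, Complex.exp_add, tpik]
  have : (2 * Real.pi * Complex.I * k * 1 : ℂ) = k * (2 * Real.pi * Complex.I) := by ring
  rw [this, Complex.exp_int_mul_two_pi_mul_I, mul_one]

lemma cf_shift {ε : ℝ} {f : ℂ → ℂ} (hf : DifferentiableOn ℂ f (Strip ε))
    (hp : ∀ z ∈ Strip ε, f (z + 1) = f z) {y : ℝ} (hy : |y| < ε) (k : ℤ) :
    cf f k = ∫ x : ℝ in (0:ℝ)..1, f (x + y * Complex.I) *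
      Complex.exp (-(tpik k * (x + y * Complex.I))) := by
  have h := shift_contour (ε := ε) (f := fun z => f z * Complex.exp (-(tpik k * z)))
    (hf.mul (by fun_prop)) (fun z hz => by
      simp only [Complex.exp_neg]; rw [hp z hz, exp_tpik_add_one]) hy
  rw [cf]; exact h.symm

lemma norm_exp_tpik (k : ℤ) (z : ℂ) : ‖Complex.exp (-(tpik k * z))‖ = Real.exp (2 * Real.pi * k * z.im) := by
  rw [Complex.norm_exp, tpik]; congr 1
  simp [Complex.mul_re, Complex.mul_im]

lemma cf_bd {ε r M : ℝ} {f : ℂ → ℂ} (hf : DifferentiableOn ℂ f (Strip ε))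
    (hp : ∀ z ∈ Strip ε, f (z + 1) = f z) (hr : 0 ≤ r) (hrε : r < ε)
    (hM : ∀ z, ‖f z‖ ≤ M) (k : ℤ) : ‖cf f k‖ ≤ Real.exp (-(2 * Real.pi * r * |(k:ℝ)|)) * M := by
  have key : ∀ y : ℝ, |y| = r → k * y = - (r * |(k:ℝ)|) →
      ‖cf f k‖ ≤ Real.exp (-(2 * Real.pi * r * |(k:ℝ)|)) * M := by
    intro y hy hky
    rw [cf_shift hf hp (hy ▸ hrε : |y| < ε)]
    have := intervalIntegral.norm_integral_le_of_norm_le_const (a := (0:ℝ)) (b := 1)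
      (f := fun x : ℝ => f (x + y * Complex.I) * Complex.exp (-(tpik k * (x + y * Complex.I))))
      (C := Real.exp (-(2 * Real.pi * r * |(k:ℝ)|)) * M) (fun x _ => by
        rw [norm_mul, norm_exp_tpik, mul_comm]
        have : 2 * Real.pi * k * (x + y * Complex.I : ℂ).im = -(2 * Real.pi * r * |(k:ℝ)|) := by
          simp; linear_combination 2 * Real.pi * hky
        rw [this]
        gcongr
        exact hM _)
    simpa using this
  rcases le_total 0 (k:ℝ) with h | h
  · exact key (-r) (by rw [abs_neg, abs_of_nonneg hr]) (by rw [abs_of_nonneg h]; ring)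
  · exact key r (abs_of_nonneg hr) (by rw [abs_of_nonpos h]; ring)

lemma summable_exp_abs {c : ℝ} (hc : 0 < c) : Summable (fun k : ℤ => Real.exp (-(c * |(k:ℝ)|))) := by
  have h : Summable (fun n : ℕ => Real.exp (-(c * n))) := by
    have := (Real.summable_exp_nat_mul_iff (a := -c)).2 (by linarith)
    refine this.congr fun n => ?_
    congr 1; ring
  refine Summable.of_nat_of_neg ?_ ?_
  · simpa using h
  · simpa using h

lemma fourier_inv {ε r M : ℝ} {f : ℂ → ℂ} (hf : DifferentiableOn ℂ f (Strip ε))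
    (hp : ∀ z ∈ Strip ε, f (z + 1) = f z) (hr : 0 ≤ r) (hrε : r < ε)
    (hM : ∀ z, ‖f z‖ ≤ M) {z : ℂ} (hz : |z.im| < r) :
    HasSum (fun k => cf f k * Complex.exp (tpik k * z)) (f z) := by
  set y := z.im with hy
  have hyε : |y| < ε := hz.trans hrε
  let g : ℝ → ℂ := fun t => f (t + y * Complex.I)
  have hg : Function.Periodic g 1 := by
    intro t
    simp only [g]
    rw [← hp _ (line_mem hyε t)]; congr 1; push_cast; ring
  have hgc : Continuous g := by
    refine hf.continuousOn.comp_continuous (by fun_prop) fun t => line_mem hyε t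
  have : Fact (0 < (1:ℝ)) := ⟨one_pos⟩
  let F : C(AddCircle (1:ℝ), ℂ) := ⟨hg.lift, by
    exact continuous_coinduced_dom.mpr hgc⟩
  have hFc : ∀ t : ℝ, F (t : AddCircle (1:ℝ)) = f (t + y * Complex.I) := fun t => rfl
  have hco : ∀ k, fourierCoeff F k = cf f k * Complex.exp (tpik k * (y * Complex.I)) := by
    intro k
    rw [fourierCoeff_eq_intervalIntegral _ _ 0, cf_shift hf hp hyε, ← intervalIntegral.integral_mul_const]
    simp only [one_div, inv_one, one_smul, zero_add]
    refine intervalIntegral.integral_congr fun t _ => ?_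
    rw [hFc, fourier_coe_apply, smul_eq_mul, mul_assoc (f _), ← Complex.exp_add, mul_comm]
    congr 2
    rw [tpik]; push_cast; ring
  have hs : Summable (fourierCoeff F) := by
    refine Summable.of_norm_bounded ((summable_exp_abs
      (c := 2 * Real.pi * (r - |y|)) (mul_pos Real.two_pi_pos (by linarith))).mul_right M) fun k => ?_
    rw [hco, norm_mul]
    have h1 := cf_bd hf hp hr hrε hM k
    have hM0 : 0 ≤ M := (norm_nonneg _).trans (hM 0)
    have h2 : ‖Complex.exp (tpik k * (y * Complex.I))‖ ≤ Real.exp (2 * Real.pi * |y| * |(k:ℝ)|) := by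
      have := norm_exp_tpik k (-(y * Complex.I))
      rw [mul_neg, neg_neg] at this
      rw [this, Real.exp_le_exp]
      simp only [Complex.neg_im, Complex.mul_im, Complex.ofReal_re, Complex.I_im, Complex.ofReal_im,
        Complex.I_re, mul_zero, mul_one, add_zero]
      have : -(k * y) ≤ |y| * |(k:ℝ)| := by rw [← abs_mul, mul_comm y]; exact neg_le_abs _
      nlinarith [Real.pi_pos]
    calc _ ≤ (Real.exp (-(2 * Real.pi * r * |(k:ℝ)|)) * M) * Real.exp (2 * Real.pi * |y| * |(k:ℝ)|) := by
          gcongr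
      _ = (Real.exp (-(2 * Real.pi * r * |(k:ℝ)|)) * Real.exp (2 * Real.pi * |y| * |(k:ℝ)|)) * M := by ring
      _ = _ := by rw [← Real.exp_add]; congr 2; ring
  have h := has_pointwise_sum_fourier_series_of_summable hs (z.re : AddCircle (1:ℝ))
  rw [hFc, hy, Complex.re_add_im] at h
  refine h.congr_fun fun k => ?_
  rw [hco, fourier_coe_apply, smul_eq_mul, mul_assoc, ← Complex.exp_add]
  congr 2
  conv_lhs => rw [← Complex.re_add_im z]
  rw [tpik]; push_cast; ring

lemma extD_cont_real {ε : ℝ} (hε : 0 < ε) (u : DSpace ε) : Continuous (fun x : ℝ => extD ε u x) := by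
  refine (extD_diff ε u).continuousOn.comp_continuous (by fun_prop) fun t => ?_
  simpa [Strip] using hε

/-- Fourier coefficient functional. -/
noncomputable def cU {ε r : ℝ} (hr : 0 ≤ r) (hrε : r < ε) (k : ℤ) : DSpace ε →L[ℂ] ℂ :=
  LinearMap.mkContinuous
    { toFun := fun u => cf (extD ε u) k
      map_add' := fun u v => by
        have h0 : ∀ w : DSpace ε, IntervalIntegrable
            (fun x : ℝ => extD ε w x * Complex.exp (-(tpik k * x))) MeasureTheory.volume 0 1 :=
          fun w => Continuous.intervalIntegrable
            ((extD_cont_real (lt_of_le_of_lt hr hrε) w).mul (by fun_prop)) _ _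
        simp only [cf]
        rw [← intervalIntegral.integral_add (h0 u) (h0 v)]
        simp only [extD_add, add_mul]
      map_smul' := fun c u => by
        simp only [cf, extD_smul, mul_assoc, intervalIntegral.integral_const_mul, RingHom.id_apply,
          smul_eq_mul] }
    (Real.exp (-(2 * Real.pi * r * |(k:ℝ)|)))
    (fun u => cf_bd (extD_diff ε u) (fun _ hz => extD_per u hz) hr hrε (extD_le ε u) k)

lemma cU_apply {ε r : ℝ} (hr : 0 ≤ r) (hrε : r < ε) (k : ℤ) (u : DSpace ε) :
    cU hr hrε k u = cf (extD ε u) k := rfl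

lemma cU_norm {ε r : ℝ} (hr : 0 ≤ r) (hrε : r < ε) (k : ℤ) :
    ‖cU (ε := ε) hr hrε k‖ ≤ Real.exp (-(2 * Real.pi * r * |(k:ℝ)|)) :=
  LinearMap.mkContinuous_norm_le _ (Real.exp_pos _).le _

lemma exists_abs_U {E : Type*} [NormedAddCommGroup E] [NormedSpace ℂ E] {r s : ℝ} (hsr : s < r)
    (c : ℤ → E →L[ℂ] ℂ) (hc : ∀ k, ‖c k‖ ≤ Real.exp (-(2 * Real.pi * r * |(k:ℝ)|))) :
    ∃ U : E →L[ℂ] XSp, ∀ u,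
      HasSum (fun k => c k u • (Complex.exp (2 * Real.pi * s * |(k:ℝ)|) • eb k)) (U u) := by
  obtain ⟨T, hTd⟩ : ∃ T : ℤ → E →L[ℂ] XSp, ∀ k, T k =
    (c k).smulRight (Complex.exp (2 * Real.pi * s * |(k:ℝ)|) • eb k) := ⟨_, fun _ => rfl⟩
  have hn : ∀ k, ‖T k‖ ≤ Real.exp (-(2 * Real.pi * (r - s) * |(k:ℝ)|)) := by
    intro k
    have e : ‖Complex.exp (2 * Real.pi * s * |(k:ℝ)|)‖ = Real.exp (2 * Real.pi * s * |(k:ℝ)|) := by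
      rw [Complex.norm_exp]; congr 1
      have : (2 * Real.pi * s * |(k:ℝ)| : ℂ) = ((2 * Real.pi * s * |(k:ℝ)| : ℝ) : ℂ) := by push_cast; ring
      rw [this, Complex.ofReal_re]
    rw [hTd, ContinuousLinearMap.norm_smulRight_apply, norm_smul, norm_eb, mul_one, e]
    calc _ ≤ Real.exp (-(2 * Real.pi * r * |(k:ℝ)|)) * Real.exp (2 * Real.pi * s * |(k:ℝ)|) := by
          gcongr; exact hc k
      _ = _ := by rw [← Real.exp_add]; congr 1; ring
  have hT : Summable T := Summable.of_norm_bounded (summable_exp_abs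
      (c := 2 * Real.pi * (r - s)) (mul_pos Real.two_pi_pos (by linarith))) hn
  obtain ⟨U, hU⟩ := hT
  refine ⟨U, fun u => ?_⟩
  have h := (ContinuousLinearMap.apply ℂ XSp u).hasSum hU
  refine h.congr_fun fun k => ?_
  rw [ContinuousLinearMap.apply_apply, hTd, ContinuousLinearMap.smulRight_apply]

lemma extD_one {ε : ℝ} (hε : 0 < ε) (x : ℝ) : extD ε (rotConst ε 1) x = 1 := by
  have : (x : ℂ) ∈ closure (Strip ε) := subset_closure (by simpa [Strip] using hε)
  rw [extD, dif_pos this, rotConst, BoundedContinuousFunction.const_apply, Complex.ofReal_one]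

lemma exists_U {ε r s : ℝ} (hs : 0 ≤ s) (hsr : s < r) (hrε : r < ε) :
    ∃ U : DSpace ε →L[ℂ] XSp, U (rotConst ε 1) = eb 0 ∧
      ∀ u z, |z.im| ≤ s → evX s z (U u) = extD ε u z := by
  have hr : 0 ≤ r := hs.trans hsr.le
  obtain ⟨U, hU⟩ := exists_abs_U hsr (fun k => cU (ε := ε) hr hrε k) (cU_norm hr hrε)
  refine ⟨U, ?_, ?_⟩
  · have h := hU (rotConst ε 1)
    have hε : 0 < ε := lt_of_le_of_lt hr hrε
    refine h.unique ?_
    refine (hasSum_ite_eq (0:ℤ) (eb 0)).congr_fun fun k => ?_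
    rw [cU_apply, cf]
    simp only [extD_one hε, one_mul]
    split_ifs with hk
    · subst hk; simp [tpik]
    · have := integral_exp_mul_complex (a := 0) (b := 1) (c := -tpik k) (neg_ne_zero.2 (tpik_ne hk))
      simp only [neg_mul] at this
      rw [this]
      have h1 := exp_tpik_add_one k 0
      simp only [zero_add, mul_one, mul_zero, Complex.exp_zero] at h1
      simp [Complex.exp_neg, h1]
  · intro u z hz
    have h := (evX s z).hasSum (hU u)
    refine h.unique ?_
    have := fourier_inv (extD_diff ε u) (fun _ hz => extD_per u hz) hr hrε (extD_le ε u)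
      (lt_of_le_of_lt hz hsr)
    refine this.congr_fun fun k => ?_
    rw [cU_apply]
    simp only [map_smul, evX_eb hz, chr, smul_eq_mul,
      ← Complex.exp_add]
    congr 2
    rw [tpik]; ring

end FourierLayer


section IFTLayer
open scoped ENNReal NNReal Topology ContDiff
open Filter Set

/-- Unnormalized derivative of the conjugacy. -/
noncomputable def xiX (δ α : ℝ) (ψ : XSp) : XSp :=
  NormedSpace.exp (mulX δ (diagX (jD α) ψ)) (eb 0)

/-- Derivative of the conjugacy. -/
noncomputable def DhX (δ α : ℝ) (ψ : XSp) : XSp := (coeX 0 (xiX δ α ψ))⁻¹ • xiX δ α ψ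

/-- Displacement of the conjugacy. -/
noncomputable def etaX (δ α : ℝ) (ψ : XSp) : XSp := diagX iD (DhX δ α ψ)

/-- Composition of a function with the conjugacy. -/
noncomputable def TX (δ σ α : ℝ) (a ψ : XSp) : XSp := compX δ σ (mulX δ (etaX δ α ψ)) a (eb 0)

/-- The nonlinear equation. -/
noncomputable def NX (δ σ τ α : ℝ) (p : XSp × XSp) : XSp :=
  mulX δ p.2 (eb 0 + TX δ σ α (diagX (dn 1 τ) p.1) p.2) -
    mulX δ (TX δ σ α ((2:ℂ) • diagX (dn 2 τ) p.1) p.2) (DhX δ α p.2)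

lemma iD_zero : iD 0 = 0 := by simp [iD, tpik]

lemma xiX_zero (δ α : ℝ) : xiX δ α 0 = eb 0 := by
  rw [xiX, map_zero, map_zero, NormedSpace.exp_zero, one_apply_eq_self]

lemma DhX_zero (δ α : ℝ) : DhX δ α 0 = eb 0 := by
  rw [DhX, xiX_zero, coeX_eb]; simp

lemma etaX_zero (δ α : ℝ) : etaX δ α 0 = 0 := by
  rw [etaX, DhX_zero, diagX_eb iD_bd, iD_zero, zero_smul]

lemma contDiffAt_xiX (δ α : ℝ) : ContDiffAt ℂ ω (xiX δ α) 0 := by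
  have h1 : ContDiffAt ℂ ω (fun ψ : XSp => mulX δ (diagX (jD α) ψ)) 0 :=
    ((mulX δ).comp (diagX (jD α))).contDiff.contDiffAt
  have h2 : ContDiffAt ℂ ω (NormedSpace.exp : (XSp →L[ℂ] XSp) → (XSp →L[ℂ] XSp))
      (mulX δ (diagX (jD α) 0)) := (NormedSpace.exp_analytic (𝕂 := ℂ) _).contDiffAt
  have h3 := h2.comp (0 : XSp) h1
  exact h3.clm_apply contDiffAt_const

lemma contDiffAt_DhX (δ α : ℝ) : ContDiffAt ℂ ω (DhX δ α) 0 := by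
  have h := contDiffAt_xiX δ α
  have h1 : ContDiffAt ℂ ω (fun ψ : XSp => coeX 0 (xiX δ α ψ)) 0 :=
    (coeX 0).contDiff.contDiffAt.comp (0 : XSp) h
  refine (h1.inv ?_).smul h
  rw [xiX_zero, coeX_eb]; simp

lemma contDiffAt_etaX (δ α : ℝ) : ContDiffAt ℂ ω (etaX δ α) 0 :=
  (diagX iD).contDiff.contDiffAt.comp (0 : XSp) (contDiffAt_DhX δ α)

variable {δ σ : ℝ}

lemma contDiffAt_comp_eta (hδ : 0 ≤ δ) (hσ : 0 < σ) (α : ℝ) :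
    ContDiffAt ℂ ω (fun ψ : XSp => compX δ σ (mulX δ (etaX δ α ψ))) 0 := by
  have h1 : ContDiffAt ℂ ω (fun ψ : XSp => mulX δ (etaX δ α ψ)) 0 :=
    (mulX δ).contDiff.contDiffAt.comp (0 : XSp) (contDiffAt_etaX δ α)
  have h2 : ContDiffAt ℂ ω (compX δ σ) (mulX δ (etaX δ α 0)) := by
    rw [etaX_zero, map_zero]; exact (compX_spec hδ hσ).1.contDiffAt
  exact h2.comp (0 : XSp) h1

lemma contDiffAt_TX (hδ : 0 ≤ δ) (hσ : 0 < σ) (α : ℝ) (x0 : XSp) (L : XSp →L[ℂ] XSp) :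
    ContDiffAt ℂ ω (fun p : XSp × XSp => TX δ σ α (L p.1) p.2) (x0, 0) := by
  have h1 : ContDiffAt ℂ ω (fun p : XSp × XSp => compX δ σ (mulX δ (etaX δ α p.2))) (x0, 0) :=
    ContDiffAt.comp (x0, (0 : XSp)) (g := fun ψ : XSp => compX δ σ (mulX δ (etaX δ α ψ)))
      (contDiffAt_comp_eta hδ hσ α) contDiffAt_snd
  have h2 : ContDiffAt ℂ ω (fun p : XSp × XSp => L p.1) (x0, 0) :=
    (L.comp (ContinuousLinearMap.fst ℂ XSp XSp)).contDiff.contDiffAt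
  exact (h1.clm_apply h2).clm_apply contDiffAt_const

lemma contDiffAt_NX (hδ : 0 ≤ δ) (hσ : 0 < σ) (τ α : ℝ) (x0 : XSp) :
    ContDiffAt ℂ ω (NX δ σ τ α) (x0, 0) := by
  have h1 := contDiffAt_TX hδ hσ α x0 (diagX (dn 1 τ))
  have h2 := contDiffAt_TX hδ hσ α x0 ((2:ℂ) • diagX (dn 2 τ))
  have h3 : ContDiffAt ℂ ω (fun p : XSp × XSp => DhX δ α p.2) (x0, 0) :=
    ContDiffAt.comp (x0, (0 : XSp)) (g := DhX δ α) (contDiffAt_DhX δ α) contDiffAt_snd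
  have h4 : ContDiffAt ℂ ω (fun p : XSp × XSp => mulX δ p.2) (x0, 0) :=
    ((mulX δ).comp (ContinuousLinearMap.snd ℂ XSp XSp)).contDiff.contDiffAt
  have h5 : ContDiffAt ℂ ω (fun p : XSp × XSp =>
      mulX δ (TX δ σ α (((2:ℂ) • diagX (dn 2 τ)) p.1) p.2)) (x0, 0) :=
    ContDiffAt.comp (x0, (0 : XSp)) (g := mulX δ) (mulX δ).contDiff.contDiffAt h2
  exact (h4.clm_apply (contDiffAt_const.add h1)).sub (h5.clm_apply h3)

lemma dn_zero_zero (n : ℕ) (hn : n ≠ 0) (τ : ℝ) : dn n τ 0 = 0 := by simp [dn, tpik, hn]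

lemma NX_const (hδ : 0 ≤ δ) {τ : ℝ} (hτ : 0 < τ) (α : ℝ) (c : ℂ) (ψ : XSp) :
    NX δ σ τ α (c • eb 0, ψ) = ψ := by
  have e1 : diagX (dn 1 τ) (c • eb 0) = 0 := by
    rw [map_smul, diagX_eb (dn_bd hτ 1), dn_zero_zero 1 one_ne_zero, zero_smul, smul_zero]
  have e2 : diagX (dn 2 τ) (c • eb 0) = 0 := by
    rw [map_smul, diagX_eb (dn_bd hτ 2), dn_zero_zero 2 two_ne_zero, zero_smul, smul_zero]
  have e3 : ∀ φ, TX δ σ α 0 φ = 0 := fun φ => by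
    rw [TX, map_zero, zero_apply]
  simp only [NX, e1, e2, smul_zero, e3, add_zero, map_zero, zero_apply, sub_zero]
  exact mulX_zero_right hδ ψ

lemma exists_g (hδ : 0 ≤ δ) (hσ : 0 < σ) {τ : ℝ} (hτ : 0 < τ) (α : ℝ) :
    ∃ g : XSp → XSp, ContDiffAt ℂ ω g ((α:ℂ) • eb 0) ∧ g ((α:ℂ) • eb 0) = 0 ∧
      ∀ᶠ x in 𝓝 ((α:ℂ) • eb 0), NX δ σ τ α (x, g x) = 0 := by
  have hN := contDiffAt_NX (σ := σ) hδ hσ τ α ((α:ℂ) • eb 0)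
  have hid : (fderiv ℂ (NX δ σ τ α) ((α:ℂ) • eb 0, 0)) ∘L .inr ℂ XSp XSp
      = ContinuousLinearMap.id ℂ XSp := by
    have h1 : HasFDerivAt (NX δ σ τ α) (fderiv ℂ (NX δ σ τ α) ((α:ℂ) • eb 0, 0))
      ((α:ℂ) • eb 0, (0 : XSp)) := (hN.differentiableAt (by simp)).hasFDerivAt
    have h2 : HasFDerivAt (fun ψ : XSp => ((α:ℂ) • eb 0, ψ)) (.inr ℂ XSp XSp) (0 : XSp) :=
      hasFDerivAt_prodMk_right _ _
    have h3 := HasFDerivAt.comp (0 : XSp) h1 h2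
    have h4 : NX δ σ τ α ∘ (fun ψ : XSp => ((α:ℂ) • eb 0, ψ)) = fun ψ => ψ := by
      funext ψ; exact NX_const hδ hτ α _ ψ
    rw [h4] at h3
    exact h3.unique (hasFDerivAt_id _)
  have hinv : ((fderiv ℂ (NX δ σ τ α) ((α:ℂ) • eb 0, 0)) ∘L .inr ℂ XSp XSp).IsInvertible := by
    rw [hid]; exact ⟨ContinuousLinearEquiv.refl ℂ XSp, rfl⟩
  have hω : (ω : WithTop ℕ∞) ≠ 0 := by simp
  refine ⟨hN.implicitFunction hω hinv, hN.contDiffAt_implicitFunction hω hinv,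
    hN.implicitFunction_apply_self hω hinv, ?_⟩
  have := hN.eventually_apply_implicitFunction hω hinv
  rwa [NX_const hδ hτ] at this

/-- The defect function. -/
noncomputable def PsX (δ σ τ α : ℝ) (p : XSp × XSp) : ℂ :=
  evX δ 0 (TX δ σ α (diagX (dn 0 τ) p.1) p.2) + evX δ 0 (etaX δ α p.2)
    - evX δ α (etaX δ α p.2) - α

lemma contDiffAt_PsX (hδ : 0 ≤ δ) (hσ : 0 < σ) (τ α : ℝ) (x0 : XSp) :
    ContDiffAt ℂ ω (PsX δ σ τ α) (x0, 0) := by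
  have h1 := contDiffAt_TX hδ hσ α x0 (diagX (dn 0 τ))
  have h3 : ContDiffAt ℂ ω (fun p : XSp × XSp => etaX δ α p.2) (x0, 0) :=
    ContDiffAt.comp (x0, (0 : XSp)) (g := etaX δ α) (contDiffAt_etaX δ α) contDiffAt_snd
  have k1 := ContDiffAt.comp (x0, (0 : XSp)) (evX δ 0).contDiff.contDiffAt h1
  have k2 := ContDiffAt.comp (x0, (0 : XSp)) (evX δ 0).contDiff.contDiffAt h3
  have k3 := ContDiffAt.comp (x0, (0 : XSp)) (evX δ α).contDiff.contDiffAt h3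
  exact ((k1.add k2).sub k3).sub contDiffAt_const

lemma PsX_const (hδ : 0 ≤ δ) (hσ : 0 < σ) {τ : ℝ} (hτ : 0 < τ) (α : ℝ) (c : ℂ) :
    PsX δ σ τ α (c • eb 0, 0) = c - α := by
  have h := evX_comp hδ hσ (z := 0) (by simpa using hδ) 0 (diagX (dn 0 τ) (c • eb 0)) (by simpa using hσ)
  simp only [PsX, TX, etaX_zero, map_zero, add_zero, sub_zero]
  rw [map_zero] at h
  rw [h, map_zero, add_zero, evX_D0 hτ (by simp; linarith), map_smul, evX_zero (by simp; linarith)]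
  simp

end IFTLayer


section PointLayer
open scoped Topology
open Filter Set

/-- The conjugacy. -/
noncomputable def hX (δ : ℝ) (η : XSp) (z : ℂ) : ℂ := z + evX δ z η

lemma const_on_strip {δ : ℝ} {G : ℂ → ℂ} (h : ∀ z ∈ Strip δ, HasDerivAt G 0 z) {z w : ℂ}
    (hz : z ∈ Strip δ) (hw : w ∈ Strip δ) : G z = G w := by
  refine (isOpen_Strip δ).is_const_of_deriv_eq_zero (convex_Strip δ).isPreconnected
    (fun z hz => (h z hz).differentiableAt.differentiableWithinAt) (fun z hz => (h z hz).deriv) hz hw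

lemma hX_add_one (δ : ℝ) (η : XSp) (z : ℂ) : hX δ η (z + 1) = hX δ η z + 1 := by
  rw [hX, hX, evX_add_one]; ring

lemma hX_im {δ σ : ℝ} {η : XSp} (hη : ‖η‖ < σ) {z : ℂ} (hz : |z.im| ≤ δ) :
    |(hX δ η z).im| < δ + σ := by
  rw [hX, Complex.add_im]
  have h1 := Complex.abs_im_le_norm (evX δ z η)
  have h2 := evX_le hz η
  have h3 := abs_add_le z.im (evX δ z η).im
  linarith

lemma hasDerivAt_hX {δ α : ℝ} {ψ : XSp} (hm : coeX 0 (xiX δ α ψ) ≠ 0) {z : ℂ} (hz : |z.im| < δ) :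
    HasDerivAt (hX δ (etaX δ α ψ)) (evX δ z (DhX δ α ψ)) z := by
  have h := (hasDerivAt_id z).add (hasDerivAt_evX hz (etaX δ α ψ))
  rw [etaX, devX_I hz] at h
  have h1 : coeX 0 (DhX δ α ψ) = 1 := by
    rw [DhX, map_smul, smul_eq_mul, inv_mul_cancel₀ hm]
  rw [h1] at h
  convert! h using 1
  ring

lemma evX_DhX {δ α : ℝ} (hδ : 0 ≤ δ) {ψ : XSp} {z : ℂ} (hz : |z.im| ≤ δ) :
    evX δ z (DhX δ α ψ) = (coeX 0 (xiX δ α ψ))⁻¹ * Complex.exp (evX δ z (diagX (jD α) ψ)) := by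
  rw [DhX, map_smul, smul_eq_mul, xiX, evX_exp hδ hz, evX_zero hz, mul_one]

lemma eq_zero_of_exp_neg {w : ℂ} (h : Complex.exp (-w) = 1) (hw : ‖w‖ < 1) : w = 0 := by
  obtain ⟨n, hn⟩ := Complex.exp_eq_one_iff.1 h
  rcases eq_or_ne n 0 with h0 | h0
  · subst h0; simpa using hn
  · exfalso
    have h1 : ‖w‖ = |(n:ℝ)| * (2 * Real.pi) := by
      rw [← norm_neg, hn]; simp [abs_of_pos Real.pi_pos]
    have h2 := one_le_abs_int h0
    have h3 := Real.pi_gt_three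
    nlinarith

lemma conj_eq {δ σ τ α C : ℝ} (hδ : 0 < δ) (hσ : 0 < σ) (hτ : 0 < τ)
    (hJ : ∀ k, ‖jD α k‖ ≤ C) (hne : ∀ k : ℤ, k ≠ 0 → Complex.exp (tpik k * α) - 1 ≠ 0)
    {x ψ : XSp} (hN : NX δ σ τ α (x, ψ) = 0) (hη : ‖etaX δ α ψ‖ < σ)
    (hm : coeX 0 (xiX δ α ψ) ≠ 0) (hψ : ‖ψ‖ < 1)
    (hT : ‖TX δ σ α (diagX (dn 1 τ) x) ψ‖ < 1) {z : ℂ} (hz : z ∈ Strip δ) :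
    hX δ (etaX δ α ψ) z + evX (δ + σ + τ) (hX δ (etaX δ α ψ) z) x =
      hX δ (etaX δ α ψ) (z + α) + PsX δ σ τ α (x, ψ) := by
  have h0 : (0:ℂ) ∈ Strip δ := by simpa [Strip] using hδ
  have h1s : (1:ℂ) ∈ Strip δ := by simpa [Strip] using hδ
  have hmem : ∀ {z : ℂ}, z ∈ Strip δ → |z.im| < δ := fun h => h
  set η := etaX δ α ψ with hηd
  set h := hX δ η with hh
  have him : ∀ {z : ℂ}, z ∈ Strip δ → |(h z).im| < δ + σ := fun hz => hX_im hη (hmem hz).le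
  have comp : ∀ {z : ℂ}, z ∈ Strip δ → ∀ a, evX δ z (TX δ σ α a ψ) = evX (δ + σ) (h z) a :=
    fun hz a => evX_comp hδ.le hσ (hmem hz).le η a hη
  have hd : ∀ {z : ℂ}, z ∈ Strip δ → HasDerivAt h (evX δ z (DhX δ α ψ)) z :=
    fun hz => hasDerivAt_hX hm (hmem hz)
  set v : ℂ → ℂ := fun w => evX (δ + σ) w (diagX (dn 1 τ) x) with hv
  have hvd : ∀ {z : ℂ}, z ∈ Strip δ → HasDerivAt (fun z => v (h z))
      (evX δ z (TX δ σ α ((2:ℂ) • diagX (dn 2 τ) x) ψ) * evX δ z (DhX δ α ψ)) z := by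
    intro z hz
    have e : evX δ z (TX δ σ α ((2:ℂ) • diagX (dn 2 τ) x) ψ)
        = devX (δ + σ) (h z) (diagX (dn 1 τ) x) := by
      rw [comp hz, map_smul, smul_eq_mul, evX_D2 hτ (him hz)]
    rw [e]
    exact HasDerivAt.comp z (hasDerivAt_evX (him hz) (diagX (dn 1 τ) x)) (hd hz)
  have hf : ∀ {z : ℂ}, z ∈ Strip δ → HasDerivAt (fun z => evX (δ + σ + τ) (h z) x)
      (v (h z) * evX δ z (DhX δ α ψ)) z := by
    intro z hz
    have e : v (h z) = devX (δ + σ + τ) (h z) x := evX_D1 hτ (him hz).le x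
    rw [e]
    exact HasDerivAt.comp z (hasDerivAt_evX ((him hz).trans (by linarith)) x) (hd hz)
  have hN' : ∀ {z : ℂ}, z ∈ Strip δ → evX δ z ψ * (1 + v (h z)) =
      evX δ z (TX δ σ α ((2:ℂ) • diagX (dn 2 τ) x) ψ) * evX δ z (DhX δ α ψ) := by
    intro z hz
    have := congrArg (evX δ z) hN
    simp only [NX] at this
    rw [map_sub, map_zero, evX_mul hδ.le (hmem hz).le, evX_mul hδ.le (hmem hz).le, map_add,
      evX_zero (hmem hz).le, comp hz (diagX (dn 1 τ) x)] at this
    exact sub_eq_zero.1 this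
  set I : ℂ → ℂ := fun z => evX δ z (diagX iD ψ) with hI
  set ψ0 := coeX 0 ψ with hψ0
  have hId : ∀ {z : ℂ}, z ∈ Strip δ → HasDerivAt I (evX δ z ψ - ψ0) z := by
    intro z hz
    have := hasDerivAt_evX (hmem hz) (diagX iD ψ)
    rwa [devX_I (hmem hz)] at this
  set Q : ℂ → ℂ := fun z => (1 + v (h z)) * Complex.exp (-I z - ψ0 * z) with hQ
  have hQd : ∀ z ∈ Strip δ, HasDerivAt Q 0 z := by
    intro z hz
    have a1 := (hvd hz).const_add 1
    have a2 := (((hId hz).neg).sub ((hasDerivAt_id z).const_mul ψ0)).cexp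
    have a3 := a1.mul a2
    convert! a3 using 1
    rw [← hN' hz]
    simp only [Pi.neg_apply, Pi.sub_apply, id]
    ring
  have hQc : ∀ {z : ℂ}, z ∈ Strip δ → Q z = Q 0 := fun hz => const_on_strip hQd hz h0
  have hh1 : h 1 = h 0 + 1 := by have := hX_add_one δ η 0; rwa [zero_add] at this
  have hv1 : v (h 1) = v (h 0) := by rw [hh1]; exact evX_add_one _
  have hI1 : I 1 = I 0 := by have := evX_add_one (r := δ) (z := 0) (diagX iD ψ); rwa [zero_add] at this
  have hv0 : 1 + v (h 0) ≠ 0 := by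
    intro hc
    have : v (h 0) = -1 := by linear_combination hc
    have h2 : ‖v (h 0)‖ < 1 := by
      have e : v (h 0) = _ := (comp h0 (diagX (dn 1 τ) x)).symm
      rw [e]
      exact (evX_le (hmem h0).le _).trans_lt hT
    rw [this] at h2; simp at h2
  have hψz : ψ0 = 0 := by
    refine eq_zero_of_exp_neg ?_ ?_
    · have := hQc h1s
      simp only [hQ] at this
      rw [hv1, hI1, mul_one, mul_zero, sub_zero, sub_eq_add_neg, Complex.exp_add, ← mul_assoc] at this
      have hne' : (1 + v (h 0)) * Complex.exp (-I 0) ≠ 0 := mul_ne_zero hv0 (Complex.exp_ne_zero _)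
      exact mul_left_cancel₀ hne' (by rw [this, mul_one])
    · calc ‖ψ0‖ ≤ ‖coeX 0‖ * ‖ψ‖ := (coeX 0).le_opNorm ψ
        _ ≤ 1 * ‖ψ‖ := by gcongr; exact norm_coeX_le 0
        _ < 1 := by rwa [one_mul]
  have hkey : ∀ {z : ℂ}, z ∈ Strip δ → (1 + v (h z)) * evX δ z (DhX δ α ψ) =
      Q 0 * evX δ (z + α) (DhX δ α ψ) := by
    intro z hz
    have hzα : |(z + α : ℂ).im| < δ := strip_add_real hz α
    rw [evX_DhX hδ.le (hmem hz).le, evX_DhX hδ.le hzα.le, evX_J hJ hne (hmem hz).le, ← hQc hz]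
    simp only [hQ, hψz, zero_mul, sub_zero]
    rw [Complex.exp_add, Complex.exp_neg]
    have := Complex.exp_ne_zero (I z)
    change _ = _ * ((coeX 0 (xiX δ α ψ))⁻¹ * (_ * Complex.exp (I z)))
    field_simp
  set G : ℂ → ℂ := fun z => h z + evX (δ + σ + τ) (h z) x - Q 0 * h (z + α) with hG
  have hGd : ∀ z ∈ Strip δ, HasDerivAt G 0 z := by
    intro z hz
    have b1 := (hd hz).add (hf hz)
    have b2 : HasDerivAt (fun z => h (z + α)) (evX δ (z + α) (DhX δ α ψ)) z :=
      (hd (strip_add_real hz α)).comp_add_const z _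
    have b3 := b1.sub (b2.const_mul (Q 0))
    convert! b3 using 1
    linear_combination -hkey hz
  have hQ0 : Q 0 = 1 := by
    have := const_on_strip hGd h1s h0
    simp only [hG] at this
    have e1 : h (1 + α) = h (0 + α) + 1 := by
      have := hX_add_one δ η (α : ℂ)
      rw [zero_add, add_comm]; exact this
    rw [hh1, evX_add_one, e1] at this
    linear_combination -this
  have hfin := const_on_strip hGd hz h0
  simp only [hG, hQ0, one_mul, zero_add] at hfin
  have hP : PsX δ σ τ α (x, ψ) = h 0 + evX (δ + σ + τ) (h 0) x - h α := by
    simp only [PsX]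
    rw [comp h0, evX_D0 hτ (him h0).le]
    simp only [hh, hX, ← hηd]
    ring
  rw [hP]
  linear_combination hfin

end PointLayer


section LinLayer
open scoped Topology
open Filter Set

lemma lin_of_conj {r s δ α : ℝ} (hs : 0 ≤ s) (hrs : r + s < δ) {H H' F : ℂ → ℂ}
    (hd : ∀ z ∈ Strip δ, HasDerivAt H (H' z) z) (hH' : ∀ z ∈ Strip δ, ‖H' z - 1‖ ≤ 1 / 2)
    (he : ∀ z ∈ Strip δ, ‖H z - z‖ ≤ s) (h1 : ∀ z ∈ Strip δ, H (z + 1) = H z + 1)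
    (hF : ∀ z ∈ Strip δ, F (H z) = H (z + α)) :
    ∃ Φ : ℂ → ℂ, DifferentiableOn ℂ Φ (Strip r) ∧ Set.InjOn Φ (Strip r) ∧
    (∀ z ∈ Strip r, Φ (z + 1) = Φ z + 1) ∧
    (∀ z ∈ Strip r, F z ∈ Strip r → Φ (F z) = Φ z + (α : ℂ)) := by
  have hlip : ∀ z ∈ Strip δ, ∀ w ∈ Strip δ, ‖(H z - z) - (H w - w)‖ ≤ 1 / 2 * ‖z - w‖ := by
    intro z hz w hw
    exact Convex.norm_image_sub_le_of_norm_hasDerivWithin_le (f := fun z => H z - z)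
      (fun x hx => ((hd x hx).sub (hasDerivAt_id x)).hasDerivWithinAt) hH' (convex_Strip δ) hw hz
  have hinv : ∀ z ∈ Strip δ, ∀ w ∈ Strip δ, ‖z - w‖ ≤ 2 * ‖H z - H w‖ := by
    intro z hz w hw
    have a := hlip z hz w hw
    have b : ‖z - w‖ ≤ ‖H z - H w‖ + ‖(H z - z) - (H w - w)‖ := by
      calc ‖z - w‖ = ‖(H z - H w) - ((H z - z) - (H w - w))‖ := by congr 1; ring
        _ ≤ _ := norm_sub_le _ _
    linarith
  have hinj : ∀ z ∈ Strip δ, ∀ w ∈ Strip δ, H z = H w → z = w := by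
    intro z hz w hw h
    have := hinv z hz w hw
    rw [h, sub_self, norm_zero, mul_zero] at this
    exact sub_eq_zero.1 (norm_le_zero_iff.1 this)
  have hsurj : ∀ w ∈ Strip r, ∃ z ∈ Strip δ, H z = w := by
    intro w hw
    have hsub : Metric.closedBall w s ⊆ Strip δ := by
      intro z hz
      have h2 : |(z - w).im| ≤ s := (Complex.abs_im_le_norm _).trans (by simpa [dist_eq_norm] using hz)
      have h3 : |z.im| ≤ |(z - w).im| + |w.im| := by
        have := abs_add_le (z - w).im w.im
        rwa [Complex.sub_im, sub_add_cancel] at this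
      have h4 : |w.im| < r := hw
      change |z.im| < δ
      linarith
    let T : ℂ → ℂ := fun z => w - (H z - z)
    have hmaps : MapsTo T (Metric.closedBall w s) (Metric.closedBall w s) := by
      intro z hz
      have := he z (hsub hz)
      simpa [T, dist_eq_norm] using this
    have hc : ContractingWith (1 / 2) (hmaps.restrict T _ _) := by
      refine ⟨by norm_num, LipschitzWith.of_dist_le_mul fun a b => ?_⟩
      have := hlip a (hsub a.2) b (hsub b.2)
      rw [Subtype.dist_eq, Subtype.dist_eq, dist_eq_norm, dist_eq_norm]
      simp only [MapsTo.val_restrict_apply, T]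
      calc _ = ‖(H a - a) - (H b - b)‖ := by rw [← norm_neg]; congr 1; ring
        _ ≤ _ := by simpa using this
    obtain ⟨z, hz, hfix, -⟩ := hc.exists_fixedPoint' Metric.isClosed_closedBall.isComplete hmaps
      (Metric.mem_closedBall_self hs) (edist_ne_top _ _)
    refine ⟨z, hsub hz, ?_⟩
    have : w - (H z - z) = z := hfix
    linear_combination -this
  choose! Φ hΦm hΦ using hsurj
  have hcont : ContinuousOn Φ (Strip r) := by
    refine LipschitzOnWith.continuousOn (K := 2) (LipschitzOnWith.of_dist_le_mul fun a ha b hb => ?_)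
    have := hinv _ (hΦm a ha) _ (hΦm b hb)
    rw [hΦ a ha, hΦ b hb] at this
    simpa [dist_eq_norm] using this
  refine ⟨Φ, ?_, ?_, ?_, ?_⟩
  · intro w hw
    have hn : Strip r ∈ 𝓝 w := (isOpen_Strip r).mem_nhds hw
    have hz := hΦm w hw
    have hne : H' (Φ w) ≠ 0 := by
      intro h0
      have := hH' _ hz
      rw [h0] at this; norm_num at this
    exact (HasDerivAt.of_local_left_inverse (hcont.continuousAt hn) (hd _ hz) hne
      (Filter.eventually_of_mem hn hΦ)).differentiableAt.differentiableWithinAt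
  · intro a ha b hb hab
    rw [← hΦ a ha, hab, hΦ b hb]
  · intro z hz
    refine hinj _ (hΦm _ (strip_add_one hz)) _ (strip_add_one (hΦm z hz)) ?_
    rw [hΦ _ (strip_add_one hz), h1 _ (hΦm z hz), hΦ z hz]
  · intro z hz hFz
    refine hinj _ (hΦm _ hFz) _ (strip_add_real (hΦm z hz) α) ?_
    rw [hΦ _ hFz, ← hF _ (hΦm z hz), hΦ z hz]

end LinLayer


section BlochLayer
open scoped Topology
open Filter Set

lemma cauchy_two {S : Set ℂ} (hS : IsOpen S) {P : ℂ → ℂ} (hP : DifferentiableOn ℂ P S) {a : ℂ} {t B : ℝ}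
    (ht : 0 < t) (hsub : Metric.closedBall a t ⊆ S)
    (hB : ∀ z ∈ Metric.closedBall a t, ‖deriv P z‖ ≤ B) {z : ℂ} (hz : ‖z - a‖ ≤ t / 2) :
    ‖P z - P a - deriv P a * (z - a)‖ ≤ 2 * B / t * ‖z - a‖ ^ 2 := by
  have hP' : DifferentiableOn ℂ (deriv P) S := hP.deriv hS
  have hsub2 : ∀ w ∈ Metric.closedBall a (t / 2), Metric.closedBall w (t / 2) ⊆ Metric.closedBall a t := by
    intro w hw
    refine Metric.closedBall_subset_closedBall' ?_
    have : dist w a ≤ t / 2 := hw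
    linarith
  have hB0 : 0 ≤ B := (norm_nonneg _).trans (hB a (Metric.mem_closedBall_self ht.le))
  have h2 : ∀ w ∈ Metric.closedBall a (t / 2), ‖deriv (deriv P) w‖ ≤ 2 * B / t := by
    intro w hw
    have := Complex.norm_deriv_le_of_forall_mem_sphere_norm_le (c := w) (R := t / 2) (C := B)
      (f := deriv P) (by linarith) ?_ ?_
    · refine this.trans (le_of_eq ?_); field_simp
    · refine DifferentiableOn.diffContOnCl ?_
      rw [closure_ball _ (by linarith)]
      exact hP'.mono ((hsub2 w hw).trans hsub)
    · intro y hy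
      exact hB y (hsub2 w hw (Metric.sphere_subset_closedBall hy))
  have hmono : Metric.closedBall a (t / 2) ⊆ S :=
    (Metric.closedBall_subset_closedBall (by linarith)).trans hsub
  have h3 : ∀ w ∈ Metric.closedBall a (t / 2), ‖deriv P w - deriv P a‖ ≤ 2 * B / t * ‖w - a‖ := by
    intro w hw
    exact Convex.norm_image_sub_le_of_norm_hasDerivWithin_le (f := deriv P)
      (fun x hx => ((hP'.differentiableAt (hS.mem_nhds (hmono hx))).hasDerivAt).hasDerivWithinAt) h2
      (convex_closedBall a (t / 2)) (Metric.mem_closedBall_self (by linarith)) hw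
  have hsub4 : Metric.closedBall a ‖z - a‖ ⊆ Metric.closedBall a (t / 2) :=
    Metric.closedBall_subset_closedBall hz
  have h4 := Convex.norm_image_sub_le_of_norm_hasDerivWithin_le (f := fun w => P w - deriv P a * w)
    (f' := fun w => deriv P w - deriv P a * 1) (C := 2 * B / t * ‖z - a‖)
    (s := Metric.closedBall a ‖z - a‖) (x := a) (y := z)
    (fun x hx => (((hP.differentiableAt (hS.mem_nhds (hmono (hsub4 hx)))).hasDerivAt).sub
      ((hasDerivAt_id x).const_mul (deriv P a))).hasDerivWithinAt)
    (fun x hx => by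
      rw [mul_one]
      refine (h3 x (hsub4 hx)).trans ?_
      have : ‖x - a‖ ≤ ‖z - a‖ := by simpa [dist_eq_norm] using hx
      gcongr) (convex_closedBall _ _) (Metric.mem_closedBall_self (norm_nonneg _))
      (by simp [dist_eq_norm])
  calc _ = ‖P z - deriv P a * z - (P a - deriv P a * a)‖ := by congr 1; ring
    _ ≤ _ := h4
    _ = _ := by ring

lemma bloch_bound {r R : ℝ} {P : ℂ → ℂ} (hP : DifferentiableOn ℂ P (Strip r)) (hinj : InjOn P (Strip r))
    (h1 : ∀ z ∈ Strip r, P (z + 1) = P z + 1) {z0 : ℂ} (hR : 0 < R) (hR1 : R ≤ 1)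
    (hsub : Metric.closedBall z0 R ⊆ Strip r) : ‖deriv P z0‖ ≤ 64 / R := by
  have hP' : DifferentiableOn ℂ (deriv P) (Strip r) := hP.deriv (isOpen_Strip r)
  have hcont : ContinuousOn (fun z => ‖deriv P z‖ * (R - ‖z - z0‖)) (Metric.closedBall z0 R) :=
    ((hP'.continuousOn.mono hsub).norm).mul (by fun_prop)
  obtain ⟨a, ha, hmax⟩ := (isCompact_closedBall z0 R).exists_isMaxOn
    ⟨z0, Metric.mem_closedBall_self hR.le⟩ hcont
  have h0 := hmax (Metric.mem_closedBall_self hR.le)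
  simp only [mem_setOf_eq, sub_self, norm_zero, sub_zero] at h0
  rw [le_div_iff₀ hR]
  refine h0.trans ?_
  by_contra! hM
  set A := ‖deriv P a‖ with hA
  have haR : ‖a - z0‖ ≤ R := by simpa [dist_eq_norm] using ha
  have hA0 : 0 ≤ A := norm_nonneg _
  set t := (R - ‖a - z0‖) / 2 with ht
  have htR : R - ‖a - z0‖ = 2 * t := by rw [ht]; ring
  rw [htR] at hM
  have ht0 : 0 ≤ t := by rw [ht]; linarith
  have htpos : 0 < t := by
    rcases ht0.eq_or_lt with h | h
    · rw [← h] at hM; norm_num at hM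
    · exact h
  have hApos : 0 < A := by
    rcases hA0.eq_or_lt with h | h
    · rw [← h] at hM; norm_num at hM
    · exact h
  have ht1 : t ≤ 1 / 2 := by have := norm_nonneg (a - z0); linarith
  have hbsub : Metric.closedBall a t ⊆ Metric.closedBall z0 R := by
    refine Metric.closedBall_subset_closedBall' ?_
    rw [dist_eq_norm]; linarith
  have hB : ∀ z ∈ Metric.closedBall a t, ‖deriv P z‖ ≤ 2 * A := by
    intro z hz
    have h2 := hmax (hbsub hz)
    simp only [mem_setOf_eq] at h2
    rw [htR] at h2
    have h3 : ‖z - z0‖ ≤ ‖z - a‖ + ‖a - z0‖ := by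
      calc _ = ‖(z - a) + (a - z0)‖ := by congr 1; ring
        _ ≤ _ := norm_add_le _ _
    have h4 : ‖z - a‖ ≤ t := by simpa [dist_eq_norm] using hz
    have h5 : t ≤ R - ‖z - z0‖ := by linarith
    have h6 : ‖deriv P z‖ * t ≤ 2 * A * t := by
      calc _ ≤ ‖deriv P z‖ * (R - ‖z - z0‖) := by gcongr
        _ ≤ A * (2 * t) := h2
        _ = _ := by ring
    exact le_of_mul_le_mul_right h6 htpos
  have htay : ∀ z, ‖z - a‖ ≤ t / 2 → ‖P z - P a - deriv P a * (z - a)‖ ≤ 2 * (2 * A) / t * ‖z - a‖ ^ 2 :=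
    fun z hz => cauchy_two (isOpen_Strip r) hP htpos (hbsub.trans hsub) hB hz
  have hsph : ∀ z, ‖z - a‖ ≤ t / 8 → A / 2 * ‖z - a‖ ≤ ‖P z - P a‖ := by
    intro z hz
    have e1 := htay z (by linarith)
    have e2 : 2 * (2 * A) / t * ‖z - a‖ ^ 2 ≤ A / 2 * ‖z - a‖ := by
      calc 2 * (2 * A) / t * ‖z - a‖ ^ 2 = 2 * (2 * A) / t * (‖z - a‖ * ‖z - a‖) := by ring
        _ ≤ 2 * (2 * A) / t * (t / 8 * ‖z - a‖) := by gcongr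
        _ = _ := by field_simp; ring
    have e3 : A * ‖z - a‖ ≤ ‖P z - P a‖ + ‖P z - P a - deriv P a * (z - a)‖ := by
      calc A * ‖z - a‖ = ‖deriv P a * (z - a)‖ := by rw [norm_mul]
        _ = ‖(P z - P a) - (P z - P a - deriv P a * (z - a))‖ := by congr 1; ring
        _ ≤ _ := norm_sub_le _ _
    linarith
  have hb8 : Metric.closedBall a (t / 8) ⊆ Strip r :=
    (Metric.closedBall_subset_closedBall (by linarith)).trans (hbsub.trans hsub)
  have hopen := DiffContOnCl.ball_subset_image_closedBall (f := P) (z₀ := a) (r := t / 8)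
    (ε := A / 2 * (t / 8)) (by
      refine DifferentiableOn.diffContOnCl ?_
      rw [closure_ball _ (by linarith)]
      exact hP.mono hb8) (by linarith) (by
      intro z hz
      have hz' : ‖z - a‖ = t / 8 := by simpa [dist_eq_norm] using hz
      have := hsph z hz'.le
      rwa [hz'] at this) (by
      have hev : ∀ᶠ z in 𝓝[≠] a, P z ≠ P a := by
        have hn : Metric.closedBall a (t / 8) ∈ 𝓝 a := Metric.closedBall_mem_nhds a (by linarith)
        filter_upwards [mem_nhdsWithin_of_mem_nhds hn, self_mem_nhdsWithin] with z hz hza h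
        exact hza (hinj (hb8 hz) (hb8 (Metric.mem_closedBall_self (by linarith))) h)
      exact hev.frequently.filter_mono nhdsWithin_le_nhds)
  have hmem : P a + 1 ∈ Metric.ball (P a) (A / 2 * (t / 8) / 2) := by
    simp only [Metric.mem_ball, dist_self_add_left, norm_one]
    nlinarith
  obtain ⟨w, hw, hPw⟩ := hopen hmem
  have haS : a ∈ Strip r := hb8 (Metric.mem_closedBall_self (by linarith))
  rw [← h1 a haS] at hPw
  have := hinj (hb8 hw) (strip_add_one haS) hPw
  rw [this] at hw
  simp only [Metric.mem_closedBall, dist_self_add_left, norm_one] at hw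
  linarith

lemma ball_sub_strip {s t : ℝ} {a : ℂ} (ha : |a.im| < s) : Metric.closedBall a t ⊆ Strip (s + t) := by
  intro z hz
  have h2 : |(z - a).im| ≤ t := (Complex.abs_im_le_norm _).trans (by simpa [dist_eq_norm] using hz)
  have h3 : |z.im| ≤ |(z - a).im| + |a.im| := by
    have := abs_add_le (z - a).im a.im
    rwa [Complex.sub_im, sub_add_cancel] at this
  change |z.im| < s + t
  linarith

lemma lam_zero {r : ℝ} (hr : 0 < r) : ∃ c > (0:ℝ), ∀ (α : ℝ) (l : ℂ) (H H' P : ℂ → ℂ),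
    ‖l‖ ≤ c → (∀ t : ℝ, HasDerivAt H (H' t) t) → Continuous (fun t : ℝ => H' t) →
    (∀ t : ℝ, ‖H' t - 1‖ ≤ c) → (∀ t : ℝ, ‖H t - t‖ ≤ c) → (∀ t : ℝ, H (t + 1) = H t + 1) →
    DifferentiableOn ℂ P (Strip r) → InjOn P (Strip r) →
    (∀ z ∈ Strip r, P (z + 1) = P z + 1) →
    (∀ t : ℝ, H (t + α) + l ∈ Strip r → P (H (t + α) + l) = P (H t) + α) → l = 0 := by
  set R := min (r / 2) 1 with hRd
  have hR : 0 < R := by rw [hRd]; positivity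
  set C := 64 / R with hC
  have hC0 : 0 < C := by positivity
  refine ⟨min (r / 16) (min (1 / (4 * C)) (r / (32 * C))), by positivity, ?_⟩
  intro α l H H' P hl hd hcont hH' he h1 hP hinj hP1 hconj
  have hlr : ‖l‖ ≤ r / 16 := hl.trans (min_le_left _ _)
  have hl2 : ‖l‖ ≤ r / (32 * C) := hl.trans ((min_le_right _ _).trans (min_le_right _ _))
  have hH'c : ∀ t : ℝ, ‖H' t - 1‖ ≤ 1 / (4 * C) := fun t =>
    (hH' t).trans ((min_le_right _ _).trans (min_le_left _ _))
  have hHim : ∀ t : ℝ, |(H t).im| < r / 8 := by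
    intro t
    have a1 := (he t).trans (min_le_left _ _)
    have a2 := Complex.abs_im_le_norm (H t - t)
    rw [Complex.sub_im, Complex.ofReal_im, sub_zero] at a2
    linarith
  have hHS : ∀ t : ℝ, H t ∈ Strip r := fun t => (hHim t).trans (by linarith)
  have hHlim : ∀ t : ℝ, |(H t + l).im| < r / 4 := by
    intro t
    have a2 := Complex.abs_im_le_norm l
    have a3 := abs_add_le (H t).im l.im
    rw [Complex.add_im]
    linarith [hHim t]
  have hHlS : ∀ t : ℝ, H t + l ∈ Strip r := fun t => (hHlim t).trans (by linarith)
  have hbl : ∀ z : ℂ, |z.im| < r / 2 → ‖deriv P z‖ ≤ C := by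
    intro z hz
    refine bloch_bound hP hinj hP1 hR (min_le_right _ _) ?_
    intro w hw
    have h2 := ball_sub_strip hz hw
    have h3 : R ≤ r / 2 := min_le_left _ _
    have h4 : |w.im| < r / 2 + R := h2
    change |w.im| < r
    linarith
  have htay : ∀ t : ℝ, ‖P (H t + l) - P (H t) - deriv P (H t) * l‖ ≤ ‖l‖ / 4 := by
    intro t
    have hs : Metric.closedBall (H t) (r / 4) ⊆ Strip (r / 2) := by
      have := ball_sub_strip (t := r / 4) (hHim t)
      refine this.trans ?_
      intro w hw
      have hw' : |w.im| < r / 8 + r / 4 := hw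
      change |w.im| < r / 2
      linarith
    have := cauchy_two (isOpen_Strip r) hP (a := H t) (t := r / 4) (B := C) (z := H t + l)
      (by linarith) (hs.trans fun w hw => lt_trans (show |w.im| < r / 2 from hw) (by linarith))
      (fun z hz => hbl z (hs hz)) (by rw [add_sub_cancel_left]; linarith)
    rw [add_sub_cancel_left] at this
    refine this.trans ?_
    calc 2 * C / (r / 4) * ‖l‖ ^ 2 = 2 * C / (r / 4) * (‖l‖ * ‖l‖) := by ring
      _ ≤ 2 * C / (r / 4) * (r / (32 * C) * ‖l‖) := by gcongr
      _ = _ := by field_simp; ring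
  have hHc : Continuous (fun t : ℝ => H t) := by
    rw [continuous_iff_continuousAt]
    intro t
    exact (hd t).continuousAt.comp Complex.continuous_ofReal.continuousAt
  set g : ℝ → ℂ := fun t => P (H t) with hg
  set q : ℝ → ℂ := fun t => P (H t + l) - P (H t) with hq
  set g' : ℝ → ℂ := fun t => deriv P (H t) * H' t with hg'
  have hgc : Continuous g := hP.continuousOn.comp_continuous hHc hHS
  have hqc : Continuous q := (hP.continuousOn.comp_continuous (hHc.add continuous_const) hHlS).sub hgc
  have hg'c : Continuous g' :=
    ((hP.deriv (isOpen_Strip r)).continuousOn.comp_continuous hHc hHS).mul hcont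
  have hgd : ∀ t : ℝ, HasDerivAt g (g' t) t := by
    intro t
    have a1 : HasDerivAt P (deriv P (H t)) (H t) :=
      (hP.differentiableAt ((isOpen_Strip r).mem_nhds (hHS t))).hasDerivAt
    exact (HasDerivAt.comp (t : ℂ) a1 (hd t)).comp_ofReal
  have hgper : ∀ t : ℝ, g (t + 1) = g t + 1 := by
    intro t
    simp only [hg]
    push_cast
    rw [h1, hP1 _ (hHS t)]
  have hqper : Function.Periodic q 1 := by
    intro t
    simp only [hq]
    push_cast
    rw [h1, hP1 _ (hHS t), add_right_comm, hP1 _ (hHlS t)]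
    ring
  have hint : ∫ t in (0:ℝ)..1, g' t = 1 := by
    rw [intervalIntegral.integral_eq_sub_of_hasDerivAt (fun t _ => hgd t) (hg'c.intervalIntegrable _ _)]
    have := hgper 0
    rw [zero_add] at this
    rw [this]; ring
  set k : ℝ → ℂ := fun t => g t - t with hk
  have hkper : Function.Periodic k 1 := by
    intro t
    simp only [hk]
    rw [hgper]; push_cast; ring
  have hrel : ∀ t : ℝ, q (t + α) = k t - k (t + α) := by
    intro t
    have e := hHlS (t + α)
    have := hconj t (by push_cast at e; exact e)
    simp only [hq, hk, hg]
    push_cast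
    rw [this]; ring
  have hkc : Continuous k := hgc.sub Complex.continuous_ofReal
  have shift : ∀ f : ℝ → ℂ, Function.Periodic f 1 → ∫ t in (0:ℝ)..1, f (t + α) = ∫ t in (0:ℝ)..1, f t := by
    intro f hf
    rw [intervalIntegral.integral_comp_add_right]
    have := hf.intervalIntegral_add_eq α 0
    rw [zero_add, add_comm 1 α, this, zero_add]
  have hq0 : ∫ t in (0:ℝ)..1, q t = 0 := by
    rw [← shift q hqper]
    simp only [hrel]
    have hk2 : IntervalIntegrable (fun t => k (t + α)) MeasureTheory.volume 0 1 :=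
      (hkc.comp (continuous_add_const α)).intervalIntegrable _ _
    rw [intervalIntegral.integral_sub (hkc.intervalIntegrable _ _) hk2, shift k hkper, sub_self]
  have hpt : ∀ t : ℝ, ‖q t - l * g' t‖ ≤ ‖l‖ / 2 := by
    intro t
    have a1 := htay t
    have a2 : ‖l * deriv P (H t) * (H' t - 1)‖ ≤ ‖l‖ / 4 := by
      rw [norm_mul, norm_mul]
      calc _ ≤ ‖l‖ * C * (1 / (4 * C)) := by
            gcongr
            · exact hbl _ ((hHim t).trans (by linarith))
            · exact hH'c t
        _ = _ := by field_simp
    calc _ = ‖(P (H t + l) - P (H t) - deriv P (H t) * l) - l * deriv P (H t) * (H' t - 1)‖ := by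
          congr 1; simp only [hq, hg']; ring
      _ ≤ _ := norm_sub_le _ _
      _ ≤ _ := by linarith
  have hfin : ‖∫ t in (0:ℝ)..1, (q t - l * g' t)‖ ≤ ‖l‖ / 2 * |1 - 0| :=
    intervalIntegral.norm_integral_le_of_norm_le_const (fun t _ => hpt t)
  have hi2 : IntervalIntegrable (fun t => l * g' t) MeasureTheory.volume 0 1 :=
    (continuous_const.mul hg'c).intervalIntegrable _ _
  rw [intervalIntegral.integral_sub (hqc.intervalIntegrable _ _) hi2, intervalIntegral.integral_const_mul,
    hq0, hint] at hfin
  simp only [mul_one, zero_sub, norm_neg, sub_zero, abs_one] at hfin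
  have := norm_nonneg l
  exact norm_le_zero_iff.1 (by linarith)

end BlochLayer


section FinalLayer
open scoped Topology ContDiff
open Filter Set

lemma abs_package {E : Type*} [NormedAddCommGroup E] [NormedSpace ℂ E] (U : E →L[ℂ] XSp)
    (f : XSp → ℂ) (e1 : E) (b : XSp) (a : ℂ) (hU : U e1 = b)
    (hf : ContDiffAt ℂ ω f (a • b)) (hline : ∀ᶠ c in 𝓝 a, f (c • b) = c - a)
    (Pr : XSp → Prop) (hPr : ∀ᶠ x in 𝓝 (a • b), Pr x) :
    ∃ κ > (0:ℝ), AnalyticOnNhd ℂ (fun u => f (U u)) (Metric.ball (a • e1) κ) ∧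
      f (U (a • e1)) = 0 ∧ fderiv ℂ (fun u => f (U u)) (a • e1) ≠ 0 ∧
      ∀ u ∈ Metric.ball (a • e1) κ, Pr (U u) := by
  have h0 : U (a • e1) = a • b := by rw [map_smul, hU]
  have hfa : AnalyticAt ℂ f (U (a • e1)) := by
    rw [h0]; exact hf.analyticAt
  have hA : AnalyticAt ℂ (fun u => f (U u)) (a • e1) :=
    hfa.comp (U.analyticAt _)
  have hPr2 : ∀ᶠ u in 𝓝 (a • e1), Pr (U u) := by
    have : Tendsto U (𝓝 (a • e1)) (𝓝 (a • b)) := by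
      rw [← h0]; exact U.continuous.continuousAt
    exact this.eventually hPr
  obtain ⟨κ, hκ, hb⟩ := Metric.eventually_nhds_iff_ball.1 (hA.eventually_analyticAt.and hPr2)
  refine ⟨κ, hκ, fun u hu => (hb u hu).1, ?_, ?_, fun u hu => (hb u hu).2⟩
  · rw [h0, hline.self_of_nhds, sub_self]
  · intro hz
    have hd : HasFDerivAt (fun u => f (U u)) (0 : E →L[ℂ] ℂ) (a • e1) := by
      rw [← hz]; exact hA.differentiableAt.hasFDerivAt
    have hl : HasDerivAt (fun c : ℂ => c • e1) ((1:ℂ) • e1) a := (hasDerivAt_id a).smul_const e1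
    have h1 := hd.comp_hasDerivAt a hl
    have h2 : HasDerivAt (fun c : ℂ => c - a) 1 a := (hasDerivAt_id a).sub_const a
    have h3 : (fun c : ℂ => c - a) =ᶠ[𝓝 a] ((fun u => f (U u)) ∘ fun c : ℂ => c • e1) := by
      filter_upwards [hline] with c hc
      simp only [Function.comp_apply, map_smul, hU, hc]
    have h4 := (h1.congr_of_eventuallyEq h3).unique h2
    simp at h4

lemma cont_pair {X Y : Type*} [TopologicalSpace X] [Zero X] [TopologicalSpace Y] {F : X × X → Y}
    {g : X → X} {x0 : X} (hg : ContinuousAt g x0) (hg0 : g x0 = 0) (hF : ContinuousAt F (x0, 0)) :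
    ContinuousAt (fun x => F (x, g x)) x0 := by
  rw [← hg0] at hF
  exact ContinuousAt.comp (f := fun x => (x, g x)) hF (continuousAt_id.prodMk hg)

lemma X_package {δ σ τ : ℝ} (hδ : 0 < δ) (hσ : 0 < σ) (hτ : 0 < τ) (α : ℝ) {d : ℝ} (hd : 0 < d) :
    ∃ g : XSp → XSp, ContDiffAt ℂ ω (fun x => PsX δ σ τ α (x, g x)) ((α:ℂ) • eb 0) ∧
      (∀ᶠ c in 𝓝 (α:ℂ), PsX δ σ τ α (c • eb 0, g (c • eb 0)) = c - α) ∧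
      ∀ᶠ x in 𝓝 ((α:ℂ) • eb 0), NX δ σ τ α (x, g x) = 0 ∧ ‖etaX δ α (g x)‖ < d ∧
        coeX 0 (xiX δ α (g x)) ≠ 0 ∧ ‖g x‖ < 1 ∧
        ‖TX δ σ α (diagX (dn 1 τ) x) (g x)‖ < 1 ∧ ‖DhX δ α (g x) - eb 0‖ < d ∧
        ‖PsX δ σ τ α (x, g x)‖ < d := by
  obtain ⟨g, hg, hg0, hgN⟩ := exists_g hδ.le hσ hτ α
  set x0 : XSp := (α:ℂ) • eb 0 with hx0
  have hpair : ContDiffAt ℂ ω (fun x => (x, g x)) x0 := contDiffAt_id.prodMk hg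
  have hPs : ContDiffAt ℂ ω (fun x => PsX δ σ τ α (x, g x)) x0 := by
    have h := contDiffAt_PsX hδ.le hσ τ α x0
    rw [← hg0] at h
    exact ContDiffAt.comp x0 h hpair
  have hline : ∀ᶠ c in 𝓝 (α:ℂ), PsX δ σ τ α (c • eb 0, g (c • eb 0)) = c - α := by
    have ht : Tendsto (fun c : ℂ => c • eb 0) (𝓝 (α:ℂ)) (𝓝 x0) :=
      (continuous_id.smul continuous_const).continuousAt
    filter_upwards [ht.eventually hgN] with c hc
    rw [NX_const hδ.le hτ] at hc
    rw [hc, PsX_const hδ.le hσ hτ]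
  have hgt : Tendsto g (𝓝 x0) (𝓝 0) := by
    have := hg.continuousAt.tendsto
    rwa [hg0] at this
  have e1 : ∀ᶠ ψ in 𝓝 (0:XSp), ‖etaX δ α ψ‖ < d := by
    have := (contDiffAt_etaX δ α).continuousAt.norm
    exact this.eventually_lt continuousAt_const (by rw [etaX_zero, norm_zero]; exact hd)
  have e2 : ∀ᶠ ψ in 𝓝 (0:XSp), coeX 0 (xiX δ α ψ) ≠ 0 := by
    have := (coeX 0).continuous.continuousAt.comp (contDiffAt_xiX δ α).continuousAt
    refine ContinuousAt.eventually_ne this ?_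
    rw [xiX_zero, coeX_eb]; simp
  have e3 : ∀ᶠ ψ in 𝓝 (0:XSp), ‖ψ‖ < 1 :=
    (continuous_norm.continuousAt).eventually_lt continuousAt_const (by simp)
  have e4 : ∀ᶠ ψ in 𝓝 (0:XSp), ‖DhX δ α ψ - eb 0‖ < d := by
    have := ((contDiffAt_DhX δ α).continuousAt.sub (continuousAt_const (y := eb 0))).norm
    exact this.eventually_lt continuousAt_const (by simpa [DhX_zero] using hd)
  have e5 : ∀ᶠ x in 𝓝 x0, ‖PsX δ σ τ α (x, g x)‖ < d := by
    refine hPs.continuousAt.norm.eventually_lt continuousAt_const ?_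
    rw [hline.self_of_nhds, sub_self, norm_zero]; exact hd
  have e6 : ∀ᶠ x in 𝓝 x0, ‖TX δ σ α (diagX (dn 1 τ) x) (g x)‖ < 1 := by
    have h2 := cont_pair hg.continuousAt hg0
      (contDiffAt_TX hδ.le hσ α x0 (diagX (dn 1 τ))).continuousAt
    refine h2.norm.eventually_lt continuousAt_const ?_
    show ‖TX δ σ α (diagX (dn 1 τ) x0) (g x0)‖ < 1
    have h3 : diagX (dn 1 τ) x0 = 0 := by
      rw [hx0, map_smul, diagX_eb (dn_bd hτ 1), dn_zero_zero 1 one_ne_zero, zero_smul, smul_zero]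
    rw [h3, TX, map_zero]
    simp
  refine ⟨g, hPs, hline, ?_⟩
  filter_upwards [hgN, hgt.eventually e1, hgt.eventually e2, hgt.eventually e3, e6,
    hgt.eventually e4, e5] with x a1 a2 a3 a4 a5 a6 a7
  exact ⟨a1, a2, a3, a4, a5, a6, a7⟩

lemma rotConst_smul (ε α : ℝ) : rotConst ε α = (α:ℂ) • rotConst ε 1 := by
  apply Subtype.ext
  ext z
  simp [rotConst]

lemma Fmap_eq {ε : ℝ} (u : DSpace ε) {z : ℂ} (hz : z ∈ Strip ε) : Fmap ε u z = z + extD ε u z := by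
  have h : z ∈ closure (Strip ε) := subset_closure hz
  rw [Fmap, extD, dif_pos h, dif_pos h]

lemma iff_core {ε δ σ τ α c d C : ℝ} (hδ : 0 < δ) (hσ : 0 < σ) (hτ : 0 < τ)
    (hJ : ∀ k, ‖jD α k‖ ≤ C) (hne : ∀ k : ℤ, k ≠ 0 → Complex.exp (tpik k * α) - 1 ≠ 0)
    (hdσ : d ≤ σ) (hdc : d ≤ c) (hd2 : d ≤ 1 / 2) (hε1 : δ + σ ≤ ε) (hε2 : ε / 2 + σ < δ)
    (hε3 : σ ≤ ε / 2)
    (hc : ∀ (α : ℝ) (l : ℂ) (H H' P : ℂ → ℂ),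
    ‖l‖ ≤ c → (∀ t : ℝ, HasDerivAt H (H' t) t) → Continuous (fun t : ℝ => H' t) →
    (∀ t : ℝ, ‖H' t - 1‖ ≤ c) → (∀ t : ℝ, ‖H t - t‖ ≤ c) → (∀ t : ℝ, H (t + 1) = H t + 1) →
    DifferentiableOn ℂ P (Strip (ε / 2)) → InjOn P (Strip (ε / 2)) →
    (∀ z ∈ Strip (ε / 2), P (z + 1) = P z + 1) →
    (∀ t : ℝ, H (t + α) + l ∈ Strip (ε / 2) → P (H (t + α) + l) = P (H t) + α) → l = 0)
    {x ψ : XSp} {u : DSpace ε} (hu : ∀ z, |z.im| ≤ δ + σ + τ → evX (δ + σ + τ) z x = extD ε u z)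
    (hN : NX δ σ τ α (x, ψ) = 0) (hη : ‖etaX δ α ψ‖ < d)
    (hm : coeX 0 (xiX δ α ψ) ≠ 0) (hψ : ‖ψ‖ < 1)
    (hT : ‖TX δ σ α (diagX (dn 1 τ) x) ψ‖ < 1) (hD : ‖DhX δ α ψ - eb 0‖ < d)
    (hl : ‖PsX δ σ τ α (x, ψ)‖ < d) :
    PsX δ σ τ α (x, ψ) = 0 ↔ Linearizable ε α u := by
  have hF : ∀ z ∈ Strip δ, Fmap ε u (hX δ (etaX δ α ψ) z) =
      hX δ (etaX δ α ψ) (z + α) + PsX δ σ τ α (x, ψ) := by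
    intro z hz
    have hz' : |z.im| < δ := hz
    have him := hX_im (hη.trans_le hdσ) hz'.le
    rw [Fmap_eq u (show |(hX δ (etaX δ α ψ) z).im| < ε by linarith), ← hu _ (by linarith)]
    exact conj_eq hδ hσ hτ hJ hne hN (hη.trans_le hdσ) hm hψ hT hz
  have hder : ∀ z ∈ Strip δ, HasDerivAt (hX δ (etaX δ α ψ)) (evX δ z (DhX δ α ψ)) z :=
    fun z hz => hasDerivAt_hX hm hz
  have hder1 : ∀ z ∈ Strip δ, ‖evX δ z (DhX δ α ψ) - 1‖ ≤ d := by
    intro z hz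
    have hz' : |z.im| < δ := hz
    rw [← evX_zero hz'.le, ← map_sub]
    exact (evX_le hz'.le _).trans hD.le
  have hdis : ∀ z ∈ Strip δ, ‖hX δ (etaX δ α ψ) z - z‖ ≤ d := by
    intro z hz
    have hz' : |z.im| < δ := hz
    rw [hX, add_sub_cancel_left]
    exact (evX_le hz'.le _).trans hη.le
  have hreal : ∀ t : ℝ, (t : ℂ) ∈ Strip δ := fun t => by simpa [Strip] using hδ
  constructor
  · intro h0
    refine lin_of_conj hσ.le hε2 hder (fun z hz => (hder1 z hz).trans hd2)
      (fun z hz => (hdis z hz).trans hdσ) (fun z _ => hX_add_one _ _ z) ?_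
    intro z hz
    rw [hF z hz, h0, add_zero]
  · rintro ⟨P, hP, hPi, hP1, hPF⟩
    refine hc α _ (hX δ (etaX δ α ψ)) (fun z => evX δ z (DhX δ α ψ)) P (hl.le.trans hdc)
      (fun t => hder t (hreal t)) ?_ (fun t => (hder1 t (hreal t)).trans hdc)
      (fun t => (hdis t (hreal t)).trans hdc) (fun t => hX_add_one _ _ _) hP hPi hP1 ?_
    · rw [continuous_iff_continuousAt]
      intro t
      have := (hasDerivAt_evX (hreal t) (DhX δ α ψ)).continuousAt
      exact ContinuousAt.comp (f := fun t : ℝ => (t : ℂ)) this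
        Complex.continuous_ofReal.continuousAt
    · intro t ht
      rw [← hF t (hreal t)] at ht ⊢
      refine hPF _ ?_ ht
      have a1 := hdis t (hreal t)
      have a2 := Complex.abs_im_le_norm (hX δ (etaX δ α ψ) t - t)
      have a3 := evX_le (r := δ) (z := t) (by simpa using hδ.le) (etaX δ α ψ)
      rw [hX, add_sub_cancel_left] at a2
      change |(hX δ (etaX δ α ψ) t).im| < ε / 2
      rw [hX, Complex.add_im, Complex.ofReal_im, zero_add]
      linarith

end FinalLayer

/-- Risler's theorem for bounded type: near `R_α` (with `α ∈ 𝒷𝒯_K`), the analytically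
linearizable maps form an embedded analytic submanifold of codimension `1`: they are the
zero set of an analytic function `Ψ` whose derivative at `R_α` is a nonzero (hence
surjective) continuous linear functional. -/
theorem linearizable_codim_one_submanifold (ε : ℝ) (hε : 0 < ε) (K : ℕ)
    (α : ℝ) (hirr : Irrational α) (hmem : α ∈ Set.Ioo (0:ℝ) 1) (hbt : BddType K α) :
    ∃ κ > (0:ℝ), ∃ Ψ : DSpace ε → ℂ,
      AnalyticOnNhd ℂ Ψ (Metric.ball (rotConst ε α) κ) ∧
      Ψ (rotConst ε α) = 0 ∧
      fderiv ℂ Ψ (rotConst ε α) ≠ 0 ∧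
      ∀ u ∈ Metric.ball (rotConst ε α) κ, (Ψ u = 0 ↔ Linearizable ε α u) := by
  obtain ⟨δ, hδd⟩ : ∃ δ, δ = 12 * ε / 16 := ⟨_, rfl⟩
  obtain ⟨σ, hσd⟩ : ∃ σ, σ = ε / 16 := ⟨_, rfl⟩
  have hδ : 0 < δ := by rw [hδd]; positivity
  have hσ : 0 < σ := by rw [hσd]; positivity
  obtain ⟨U, hU1, hU⟩ := exists_U (ε := ε) (r := 15 * ε / 16) (s := δ + σ + σ)
    (by positivity) (by linarith) (by linarith)
  obtain ⟨c, hc0, hc⟩ := lam_zero (r := ε / 2) (by positivity)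
  have hd : 0 < min σ (min c (1 / 2)) := by positivity
  obtain ⟨g, hg, hline, hev⟩ := X_package hδ hσ hσ α hd
  obtain ⟨κ, hκ, h1, h2, h3, h4⟩ := abs_package U _ (rotConst ε 1) (eb 0) (α:ℂ) hU1 hg hline _ hev
  rw [rotConst_smul ε α]
  refine ⟨κ, hκ, _, h1, h2, h3, ?_⟩
  intro u hu
  obtain ⟨a1, a2, a3, a4, a5, a6, a7⟩ := h4 u hu
  exact iff_core hδ hσ hσ (jD_bd hirr hmem hbt) (smalldiv_ne hirr hmem hbt)
    (min_le_left _ _) ((min_le_right _ _).trans (min_le_left _ _))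
    ((min_le_right _ _).trans (min_le_right _ _)) (by linarith) (by linarith) (by linarith)
    hc (hU u) a1 a2 a3 a4 a5 a6 a7
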